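/- For every integer k ≥ 1 and every real 0 < ε < 1 there exists a constant C (depending only on k and ε) such that: for every finite undirected unweighted simple graph G on n vertices and every set P of (ordered) pairs of vertices of G, there is a subgraph H ⊆ G with at most C · 2^(2k/ε) · n^(1 + 10kε) · |P|^(1/2^(k+1)) edges such that for every pair (s,t) ∈ P with s, t connected in G, dist_H(s,t) ≤ dist_G(s,t) + 2^(30k/ε) · (dist_G(s,t))^(1 − 1/k). -/

import Mathlib

/-!
A prespanner of range `ℓ` is a sparse subgraph to which a few extra edges can be added, for any
single pair at distance at most `ℓ`, so as to bring the error for that pair down to a small additive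
term. The range is increased from `r` to `R * r` as follows. Cover `G` by clusters of radius `O(r)`
and total size `n ^ (1 + ε)` (ball growing), and take a prespanner and a breadth-first search tree
of every cluster. A geodesic of length at most `R * r` is cut into pieces of length `r`, each lying
in a cluster. Either the clusters met have small total size, so that repairing every piece is cheap,
or a prefix and a suffix of the geodesic, both cheap to repair, meet clusters of large total size
and hence both meet a small hitting set `S` of clusters. Path buying adds few edges that make the
distances between clusters of `S` almost optimal, and this provides the detour.

Iterating `k` times from edges gives range `R ^ k` with additive error `O(R ^ (k - 1))`, which is
sublinear for pairs at distance about `R ^ k`. Repair every pair of `P` at all scales `R = 2 ^ j`;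
the cost of the prespanner and that of the repairs balance at density `|P| ^ (1 / 2 ^ (k + 1))`.
-/

namespace PairwiseSpanner

open Finset SimpleGraph

universe u

variable {V : Type u}

section Edges

/-- The number of edges as a real number, ready to be compared with real powers. -/
noncomputable def numEdges (G : SimpleGraph V) : ℝ := G.edgeSet.ncard

lemma numEdges_bot : numEdges (⊥ : SimpleGraph V) = 0 := by simp [numEdges]

lemma numEdges_sup_le (G H : SimpleGraph V) : numEdges (G ⊔ H) ≤ numEdges G + numEdges H := by
  simp only [numEdges, edgeSet_sup]
  exact_mod_cast Set.ncard_union_le _ _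

lemma numEdges_finset_sup_le {ι : Type*} (s : Finset ι) (F : ι → SimpleGraph V) :
    numEdges (s.sup F) ≤ ∑ i ∈ s, numEdges (F i) := by
  classical
  induction s using Finset.induction_on with
  | empty => simp [numEdges_bot]
  | insert a s ha ih =>
    rw [sup_insert, sum_insert ha]
    exact (numEdges_sup_le _ _).trans (by gcongr)

lemma numEdges_edge_le_one (s t : V) : numEdges (edge s t) ≤ 1 := by
  have h : (edge s t).edgeSet ⊆ {s(s, t)} := edgeSet_edge_subset
  rw [numEdges, Nat.cast_le_one]
  exact (Set.ncard_le_ncard h).trans (Set.ncard_singleton _).le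

lemma numEdges_le_card_sq [Finite V] (G : SimpleGraph V) :
    numEdges G ≤ (Nat.card V : ℝ) ^ 2 := by
  have h : G.edgeSet ⊆ (fun p : V × V ↦ s(p.1, p.2)) '' Set.univ := fun e _ ↦ by
    induction e with | _ a b => exact ⟨(a, b), trivial, rfl⟩
  have hcard : G.edgeSet.ncard ≤ Nat.card (V × V) := by
    rw [← Set.ncard_univ]
    exact (Set.ncard_le_ncard h).trans (Set.ncard_image_le (Set.toFinite _))
  rw [Nat.card_prod, ← sq] at hcard
  rw [numEdges]
  exact_mod_cast hcard

lemma numEdges_spanningCoe {s : Set V} (G : SimpleGraph s) :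
    numEdges G.spanningCoe = numEdges G := by
  rw [numEdges, numEdges, spanningCoe, edgeSet_map,
    Set.ncard_image_of_injective _ (Function.Embedding.injective _)]

end Edges

section Distance

variable {G : SimpleGraph V}

lemma exists_adj_edist_add_one_eq {z x : V} (hxz : x ≠ z) (hx : G.edist z x ≠ ⊤) :
    ∃ y, G.Adj y x ∧ G.edist z y + 1 = G.edist z x := by
  obtain ⟨p, hp⟩ := exists_walk_of_edist_ne_top hx
  have hnil : ¬ p.Nil := fun h ↦ hxz h.eq.symm
  have hadj := p.adj_penultimate hnil
  refine ⟨p.penultimate, hadj, le_antisymm ?_ ?_⟩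
  · have hlen : p.dropLast.length + 1 = p.length := by
      rw [← Walk.length_concat _ hadj, Walk.concat_dropLast]
    rw [← hp, ← hlen, Nat.cast_add_one]
    gcongr
    exact edist_le _
  · rw [← edist_eq_one_iff_adj.2 hadj]
    exact SimpleGraph.edist_triangle

lemma edist_spanningCoe_le {s : Set V} (G : SimpleGraph s) (x y : s) :
    G.spanningCoe.edist (x : V) y ≤ G.edist x y := by
  by_cases h : G.edist x y = ⊤
  · rw [h]; exact le_top
  obtain ⟨p, hp⟩ := exists_walk_of_edist_ne_top h
  let f : G →g G.spanningCoe := (Embedding.map (Function.Embedding.subtype _) G).toHom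
  rw [← hp, ← p.length_map f]
  exact edist_le _

lemma edist_induce_le {s : Set V} {x y : V} (hx : x ∈ s) (hy : y ∈ s)
    (hs : ∀ z, G.edist x z ≤ G.edist x y → z ∈ s) :
    (G.induce s).edist ⟨x, hx⟩ ⟨y, hy⟩ ≤ G.edist x y := by
  classical
  by_cases h : G.edist x y = ⊤
  · rw [h]; exact le_top
  obtain ⟨p, hp⟩ := exists_walk_of_edist_ne_top h
  have hsupp (z : V) (hz : z ∈ p.support) : z ∈ s := by
    refine hs z ((edist_le (p.takeUntil z hz)).trans ?_)
    rw [← hp]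
    exact_mod_cast p.length_takeUntil_le_length hz
  have hlen : (p.induce s hsupp).length = p.length := by
    rw [← Walk.length_map (Embedding.induce s).toHom, p.map_induce hsupp]
    rfl
  rw [← hp, ← hlen]
  exact edist_le _

/-- The closed ball around `v`; Mathlib's `SimpleGraph.ball` is open. -/
def closedBall (G : SimpleGraph V) (v : V) (ρ : ℕ) : Set V := {x | G.edist v x ≤ ρ}

lemma mem_closedBall {v x : V} {ρ : ℕ} : x ∈ closedBall G v ρ ↔ G.edist v x ≤ ρ := .rfl

lemma mem_closedBall_self (G : SimpleGraph V) (v : V) (ρ : ℕ) : v ∈ closedBall G v ρ := by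
  simp [closedBall]

lemma one_le_ncard_closedBall [Finite V] (G : SimpleGraph V) (v : V) (ρ : ℕ) :
    1 ≤ (closedBall G v ρ).ncard :=
  (Set.ncard_pos).2 ⟨v, mem_closedBall_self G v ρ⟩

/-- A breadth-first search tree of depth `ρ`. -/
lemma exists_le_forall_edist_le [Finite V] (G : SimpleGraph V) (z : V) (ρ : ℕ) :
    ∃ T ≤ G, numEdges T ≤ (closedBall G z ρ).ncard ∧
      ∀ x ∈ closedBall G z ρ, T.edist z x ≤ G.edist z x := by
  have hparent (x : V) : ∃ y, x ≠ z → x ∈ closedBall G z ρ →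
      G.Adj y x ∧ G.edist z y + 1 = G.edist z x := by
    by_cases h : x ≠ z ∧ x ∈ closedBall G z ρ
    · obtain ⟨y, hy⟩ := exists_adj_edist_add_one_eq h.1 (ne_top_of_le_ne_top (by simp) h.2)
      exact ⟨y, fun _ _ ↦ hy⟩
    · exact ⟨x, fun h₁ h₂ ↦ absurd ⟨h₁, h₂⟩ h⟩
  choose parent hparent using hparent
  let B := closedBall G z ρ \ {z}
  let T := fromEdgeSet ((fun x ↦ s(parent x, x)) '' B)
  refine ⟨T, ?_, ?_, ?_⟩
  · rw [fromEdgeSet_le]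
    rintro - ⟨⟨x, hx, rfl⟩, -⟩
    exact (hparent x hx.2 hx.1).1
  · rw [numEdges, edgeSet_fromEdgeSet]
    exact_mod_cast (Set.ncard_le_ncard Set.sdiff_subset).trans
      ((Set.ncard_image_le (Set.toFinite B)).trans (Set.ncard_le_ncard Set.sdiff_subset))
  · have hdist (m : ℕ) : ∀ x ∈ closedBall G z ρ, G.edist z x = m → T.edist z x ≤ m := by
      induction m with
      | zero => simp +contextual
      | succ m ih =>
        intro x hx hxm
        have hxz : x ≠ z := by
          rintro rfl
          rw [edist_self] at hxm
          exact m.succ_ne_zero (Nat.cast_eq_zero.1 hxm.symm)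
        obtain ⟨hadj, hpar⟩ := hparent x hxz hx
        have hparm : G.edist z (parent x) = m := by
          exact ENat.add_left_injective_of_ne_top ENat.one_ne_top (hpar.trans hxm)
        have hT : T.Adj (parent x) x := (fromEdgeSet_adj _).2 ⟨⟨x, ⟨hx, hxz⟩, rfl⟩, hadj.ne⟩
        have hmem : parent x ∈ closedBall G z ρ := (hpar ▸ le_self_add).trans hx
        rw [Nat.cast_add_one, ← edist_eq_one_iff_adj.2 hT]
        exact SimpleGraph.edist_triangle.trans (by gcongr; exact ih _ hmem hparm)
    intro x hx
    obtain ⟨m, hm⟩ := ENat.ne_top_iff_exists.1 (ne_top_of_le_ne_top (by simp) hx)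
    exact hm ▸ hdist m x hx hm.symm

end Distance

section GeodesicNet

variable {G : SimpleGraph V} {s t : V} {r R m : ℕ} {u : ℕ → V}

lemma edist_getVert_le (p : G.Walk s t) {i j : ℕ} (hij : i ≤ j) :
    G.edist (p.getVert i) (p.getVert j) ≤ (j - i : ℕ) := by
  induction j, hij using Nat.le_induction with
  | base => simp
  | succ j hij ih =>
    have hstep : G.edist (p.getVert j) (p.getVert (j + 1)) ≤ 1 := by
      refine edist_le_one_iff_adj_or_eq.2 ?_
      obtain hj | hj := lt_or_ge j p.length
      · exact .inl (p.adj_getVert_succ hj)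
      · rw [p.getVert_of_length_le hj, p.getVert_of_length_le (hj.trans j.le_succ)]
        exact .inr rfl
    rw [Nat.succ_sub hij, Nat.succ_eq_add_one, Nat.cast_add_one]
    exact SimpleGraph.edist_triangle.trans (add_le_add ih hstep)

lemma edist_getVert_of_length_eq_edist {p : G.Walk s t} (hp : p.length = G.edist s t) {i j : ℕ}
    (hij : i ≤ j) (hj : j ≤ p.length) :
    G.edist (p.getVert i) (p.getVert j) = (j - i : ℕ) := by
  refine le_antisymm (edist_getVert_le p hij) ?_
  have hsi := edist_getVert_le p i.zero_le
  have hjt := edist_getVert_le p hj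
  rw [p.getVert_zero] at hsi
  rw [p.getVert_length] at hjt
  have hst : (p.length : ℕ∞) ≤ G.edist s (p.getVert i) +
      (G.edist (p.getVert i) (p.getVert j) + G.edist (p.getVert j) t) :=
    hp.le.trans (SimpleGraph.edist_triangle.trans (by gcongr; exact SimpleGraph.edist_triangle))
  generalize G.edist s (p.getVert i) = a at *
  generalize G.edist (p.getVert i) (p.getVert j) = b at *
  generalize G.edist (p.getVert j) t = c at *
  clear hp
  enat_to_nat
  omega

/-- The vertices `u 0 = s, …, u m = t` lie on a geodesic of `G`, consecutive ones at distance
exactly `r` except that the last step may be shorter. -/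
structure GeodesicNet (G : SimpleGraph V) (r : ℕ) (s t : V) (m : ℕ) (u : ℕ → V) : Prop where
  source : u 0 = s
  target : u m = t
  edist_succ_le (i : ℕ) : G.edist (u i) (u (i + 1)) ≤ r
  edist_add {i j k : ℕ} : i ≤ j → j ≤ k →
    G.edist (u i) (u j) + G.edist (u j) (u k) = G.edist (u i) (u k)
  separated {i j : ℕ} : i ≤ j → j < m → ((j - i) * r : ℕ) ≤ G.edist (u i) (u j)

lemma exists_geodesicNet (hr : 0 < r) (hst : G.edist s t ≤ (R * r : ℕ)) :
    ∃ m ≤ R, ∃ u, GeodesicNet G r s t m u := by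
  obtain ⟨p, hp⟩ := exists_walk_of_edist_ne_top (ne_top_of_le_ne_top (ENat.natCast_ne_top _) hst)
  rw [← hp, Nat.cast_le] at hst
  let pos (i : ℕ) : ℕ := min (r * i) p.length
  have hpos_mono : Monotone pos := fun i j hij ↦ min_le_min_right _ (Nat.mul_le_mul_left _ hij)
  have hdist {i j : ℕ} (hij : i ≤ j) :
      G.edist (p.getVert (pos i)) (p.getVert (pos j)) = (pos j - pos i : ℕ) :=
    edist_getVert_of_length_eq_edist hp (hpos_mono hij) (min_le_right _ _)
  refine ⟨p.length ⌈/⌉ r, (ceilDiv_le_iff_le_mul hr).2 (mul_comm R r ▸ hst),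
    fun i ↦ p.getVert (pos i), ?_, ?_, fun i ↦ ?_, fun {i j k} hij hjk ↦ ?_, fun {i j} hij hj ↦ ?_⟩
  · simp [pos]
  · have hm : p.length ≤ r * (p.length ⌈/⌉ r) := (ceilDiv_le_iff_le_mul hr).1 le_rfl
    simp only [pos, min_eq_right hm, p.getVert_length]
  · rw [hdist i.le_succ, Nat.cast_le]
    simp only [pos, Nat.succ_eq_add_one, mul_add, mul_one]
    omega
  · rw [hdist hij, hdist hjk, hdist (hij.trans hjk)]
    have := hpos_mono hij
    have := hpos_mono hjk
    norm_cast
    omega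
  · have hjr : r * j < p.length := not_le.1 fun h ↦ hj.not_ge ((ceilDiv_le_iff_le_mul hr).2 h)
    have hir : r * i ≤ r * j := Nat.mul_le_mul_left _ hij
    rw [hdist hij, Nat.cast_le, mul_comm, Nat.mul_sub]
    simp only [pos]
    omega

end GeodesicNet

section BallCover

variable {G : SimpleGraph V} {r c : ℕ}

/-- Balls of radius at most `c * r` around finitely many centers, called clusters, such that the
`r`-ball around every vertex `v` is contained in the cluster around `home v`. -/
structure BallCover (G : SimpleGraph V) (r c : ℕ) where
  centers : Finset V
  radius : V → ℕ
  home : V → V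
  radius_le (z : V) : radius z ≤ c * r
  home_mem (v : V) : home v ∈ centers
  closedBall_subset (v : V) : closedBall G v r ⊆ closedBall G (home v) (radius (home v))

/-- The cluster around `z`. -/
def BallCover.cluster (D : BallCover G r c) (z : V) : Set V := closedBall G z (D.radius z)

/-- The size of the cluster around `z`, as a real number. -/
noncomputable def BallCover.weight (D : BallCover G r c) (z : V) : ℝ := (D.cluster z).ncard

/-- The total weight of the clusters, that is, their total size counted with overlaps. -/
noncomputable def BallCover.volume (D : BallCover G r c) : ℝ := ∑ z ∈ D.centers, D.weight z

lemma BallCover.edist_le_of_mem_cluster (D : BallCover G r c) {z x : V} (hx : x ∈ D.cluster z) :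
    G.edist z x ≤ (c * r : ℕ) :=
  le_trans hx (Nat.cast_le.2 (D.radius_le z))

lemma BallCover.mem_cluster_home_of_edist_le (D : BallCover G r c) {v x : V}
    (hx : G.edist v x ≤ r) : x ∈ D.cluster (D.home v) :=
  D.closedBall_subset v hx

lemma BallCover.mem_cluster_home (D : BallCover G r c) (v : V) : v ∈ D.cluster (D.home v) :=
  D.mem_cluster_home_of_edist_le (by simp)

lemma BallCover.weight_nonneg (D : BallCover G r c) (z : V) : 0 ≤ D.weight z := Nat.cast_nonneg _

lemma BallCover.weight_pos [Finite V] (D : BallCover G r c) (z : V) : 0 < D.weight z :=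
  Nat.cast_pos.2 (one_le_ncard_closedBall G z _)

lemma BallCover.volume_nonneg (D : BallCover G r c) : 0 ≤ D.volume :=
  sum_nonneg fun z _ ↦ D.weight_nonneg z

lemma closedBall_subset_of_inter_nonempty {v z : V} {a b ρ : ℕ}
    (h : (closedBall G v a ∩ closedBall G z b).Nonempty) (hρ : b + a + r ≤ ρ) :
    closedBall G v r ⊆ closedBall G z ρ := by
  obtain ⟨y, hvy, hzy⟩ := h
  intro x hvx
  rw [mem_closedBall] at hvx hvy hzy ⊢
  rw [SimpleGraph.edist_comm] at hvy
  calc G.edist z x ≤ G.edist z y + (G.edist y v + G.edist v x) :=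
        SimpleGraph.edist_triangle.trans (by gcongr; exact SimpleGraph.edist_triangle)
    _ ≤ b + (a + r) := by gcongr
    _ ≤ ρ := by
        norm_cast
        omega

variable [Finite V] {β : ℝ} {J : ℕ}

lemma sum_ncard_le_card_of_pairwiseDisjoint {ι : Type*} {I : Finset ι} {B : ι → Set V}
    (hB : (I : Set ι).PairwiseDisjoint B) : ∑ i ∈ I, (B i).ncard ≤ Nat.card V := by
  classical
  have := Fintype.ofFinite V
  have hB' : (I : Set ι).PairwiseDisjoint fun i ↦ (B i).toFinset := fun i hi j hj hij ↦
    Set.disjoint_toFinset.2 (hB hi hj hij)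
  simp only [Set.ncard_eq_toFinset_card', Nat.card_eq_fintype_card, ← card_biUnion hB']
  exact card_le_univ _

/-- Otherwise the ball of radius `4 ^ J * r` would have more than `β ^ J` elements. -/
lemma exists_ncard_closedBall_le_mul (G : SimpleGraph V) (r : ℕ) (hβ : 0 ≤ β) (hJ : 1 ≤ J)
    (hcard : (Nat.card V : ℝ) ≤ β ^ J) (v : V) :
    ∃ j < J, ((closedBall G v (4 ^ (j + 1) * r)).ncard : ℝ) ≤
      β * (closedBall G v (4 ^ j * r)).ncard := by
  by_contra! hgrow
  have hpow (j : ℕ) (hj : j ≤ J) : β ^ j ≤ (closedBall G v (4 ^ j * r)).ncard := by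
    induction j with
    | zero =>
      rw [pow_zero]
      exact_mod_cast one_le_ncard_closedBall G v _
    | succ j ih =>
      rw [pow_succ']
      exact (mul_le_mul_of_nonneg_left (ih (by omega)) hβ).trans (hgrow j hj).le
  obtain ⟨j, rfl⟩ : ∃ j, J = j + 1 := ⟨J - 1, by omega⟩
  have hle : ((closedBall G v (4 ^ (j + 1) * r)).ncard : ℝ) ≤ Nat.card V := by
    exact_mod_cast Set.ncard_le_card _
  refine (hle.trans (hcard.trans ?_)).not_gt (hgrow j j.lt_succ_self)
  rw [pow_succ']
  exact mul_le_mul_of_nonneg_left (hpow j j.le_succ) hβ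

/-- Apply the Vitali covering lemma to balls whose size grows by at most a factor `β` when their
radius is quadrupled. -/
lemma exists_ballCover_volume_le (G : SimpleGraph V) (r : ℕ) (hβ : 0 ≤ β) (hJ : 1 ≤ J)
    (hcard : (Nat.card V : ℝ) ≤ β ^ J) :
    ∃ D : BallCover G r (4 ^ J), D.volume ≤ β * Nat.card V := by
  classical
  have := Fintype.ofFinite V
  choose j hjJ hgrowth using exists_ncard_closedBall_le_mul G r hβ hJ hcard
  let ρ (v : V) : ℕ := 4 ^ j v * r
  have hρ (v : V) : 4 ^ (j v + 1) * r = 4 * ρ v := by rw [pow_succ']; ring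
  have hρ_le (v : V) : 4 ^ (j v + 1) * r ≤ 4 ^ J * r :=
    Nat.mul_le_mul_right r (Nat.pow_le_pow_right (by norm_num) (hjJ v))
  have hr_le (v : V) : r ≤ ρ v := Nat.le_mul_of_pos_left r (by positivity)
  obtain ⟨Z, -, hdisj, hcover⟩ := Vitali.exists_disjoint_subfamily_covering_enlargement
    (fun v ↦ closedBall G v (ρ v)) Set.univ (fun v ↦ (ρ v : ℝ)) (3 / 2) (by norm_num)
    (fun _ _ ↦ Nat.cast_nonneg _) (4 ^ J * r : ℕ)
    (fun v _ ↦ Nat.cast_le.2 ((hρ v ▸ hρ_le v).trans' (by omega)))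
    (fun v _ ↦ ⟨v, mem_closedBall_self G v _⟩)
  choose home hhome using fun v ↦ hcover v trivial
  have hsub (v : V) :
      closedBall G v r ⊆ closedBall G (home v) (4 ^ (j (home v) + 1) * r) := by
    obtain ⟨-, hinter, hle⟩ := hhome v
    have hle : 2 * ρ v ≤ 3 * ρ (home v) := by
      have : (2 : ℝ) * ρ v ≤ 3 * ρ (home v) := by linarith
      exact_mod_cast this
    refine closedBall_subset_of_inter_nonempty hinter ?_
    have := hr_le (home v)
    rw [hρ]
    omega
  refine ⟨⟨Z.toFinset, fun z ↦ 4 ^ (j z + 1) * r, home, hρ_le,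
    fun v ↦ Set.mem_toFinset.2 (hhome v).1, hsub⟩, ?_⟩
  have hpacking : ∑ z ∈ Z.toFinset, (closedBall G z (ρ z)).ncard ≤ Nat.card V :=
    sum_ncard_le_card_of_pairwiseDisjoint (by rwa [Set.coe_toFinset])
  calc ∑ z ∈ Z.toFinset, ((closedBall G z (4 ^ (j z + 1) * r)).ncard : ℝ)
      ≤ ∑ z ∈ Z.toFinset, β * ((closedBall G z (ρ z)).ncard : ℝ) :=
        sum_le_sum fun z _ ↦ hgrowth z
    _ ≤ β * Nat.card V := by
        rw [← mul_sum]
        exact mul_le_mul_of_nonneg_left (by exact_mod_cast hpacking) hβ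

end BallCover

section HittingSet

variable {α : Type*} {Z : Finset α} {w : α → ℝ} {𝒜 : Finset (Finset α)} {τ : ℝ}

lemma exists_card_mul_le_card_filter_mem_mul_sum [DecidableEq α] (hZ : Z.Nonempty)
    (hw : ∀ z ∈ Z, 0 ≤ w z) (h𝒜 : ∀ A ∈ 𝒜, A ⊆ Z) (hτ : ∀ A ∈ 𝒜, τ ≤ ∑ z ∈ A, w z) :
    ∃ z ∈ Z, (#𝒜 : ℝ) * τ ≤ #{A ∈ 𝒜 | z ∈ A} * ∑ z ∈ Z, w z := by
  obtain ⟨z₀, hz₀, hmax⟩ := Z.exists_max_image (fun z ↦ #{A ∈ 𝒜 | z ∈ A}) hZ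
  refine ⟨z₀, hz₀, ?_⟩
  have hcomm : ∑ A ∈ 𝒜, ∑ z ∈ A, w z = ∑ z ∈ Z, ∑ _ ∈ {A ∈ 𝒜 | z ∈ A}, w z :=
    sum_comm' fun A z ↦ by
      rw [mem_filter]
      exact ⟨fun h ↦ ⟨h, h𝒜 A h.1 h.2⟩, fun h ↦ h.1⟩
  calc (#𝒜 : ℝ) * τ ≤ ∑ A ∈ 𝒜, ∑ z ∈ A, w z := by
        rw [← nsmul_eq_mul]
        exact card_nsmul_le_sum _ _ _ hτ
    _ = ∑ z ∈ Z, #{A ∈ 𝒜 | z ∈ A} * w z := by simp only [hcomm, sum_const, nsmul_eq_mul]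
    _ ≤ ∑ z ∈ Z, #{A ∈ 𝒜 | z₀ ∈ A} * w z := by
        exact sum_le_sum fun z hz ↦
          mul_le_mul_of_nonneg_right (Nat.cast_le.2 (hmax z hz)) (hw z hz)
    _ = #{A ∈ 𝒜 | z₀ ∈ A} * ∑ z ∈ Z, w z := (mul_sum _ _ _).symm

lemma exists_card_filter_disjoint_le_mul_exp [DecidableEq α] (hZ : 0 < ∑ z ∈ Z, w z)
    (hw : ∀ z ∈ Z, 0 ≤ w z) (h𝒜 : ∀ A ∈ 𝒜, A ⊆ Z) (hτ : ∀ A ∈ 𝒜, τ ≤ ∑ z ∈ A, w z) (m : ℕ) :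
    ∃ S ⊆ Z, #S ≤ m ∧
      (#{A ∈ 𝒜 | Disjoint A S} : ℝ) ≤ #𝒜 * Real.exp (-(m * (τ / ∑ z ∈ Z, w z))) := by
  induction m with
  | zero => exact ⟨∅, by simp⟩
  | succ m ih =>
    obtain ⟨S, hSZ, hSm, hS⟩ := ih
    set ℬ : Finset (Finset α) := {A ∈ 𝒜 | Disjoint A S}
    have hℬ : ℬ ⊆ 𝒜 := filter_subset _ _
    obtain ⟨z, hz, hdeg⟩ := exists_card_mul_le_card_filter_mem_mul_sum
      (nonempty_of_sum_ne_zero hZ.ne') hw (fun A hA ↦ h𝒜 A (hℬ hA)) fun A hA ↦ hτ A (hℬ hA)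
    refine ⟨insert z S, insert_subset hz hSZ, (card_insert_le _ _).trans (by omega), ?_⟩
    have hrest : ({A ∈ 𝒜 | Disjoint A (insert z S)} : Finset (Finset α)) = {A ∈ ℬ | z ∉ A} := by
      ext A
      simp only [ℬ, mem_filter, disjoint_insert_right]
      tauto
    have hsplit : (#{A ∈ ℬ | z ∈ A} : ℝ) + #{A ∈ ℬ | z ∉ A} = #ℬ := by
      exact_mod_cast card_filter_add_card_filter_not (s := ℬ) fun A ↦ z ∈ A
    rw [← div_le_iff₀ hZ, mul_div_assoc] at hdeg
    set x := τ / ∑ z ∈ Z, w z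
    calc (#{A ∈ 𝒜 | Disjoint A (insert z S)} : ℝ) ≤ #ℬ * (1 - x) := by rw [hrest]; linarith
      _ ≤ #ℬ * Real.exp (-x) := by gcongr; exact Real.one_sub_le_exp_neg x
      _ ≤ #𝒜 * Real.exp (-(m * x)) * Real.exp (-x) := by gcongr
      _ = #𝒜 * Real.exp (-((m + 1 : ℕ) * x)) := by
          rw [mul_assoc, ← Real.exp_add]
          push_cast
          ring_nf

lemma exists_hitting_set (hw : ∀ z ∈ Z, 0 ≤ w z) (h𝒜 : ∀ A ∈ 𝒜, A ⊆ Z) (hτ₀ : 0 < τ)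
    (hτ : ∀ A ∈ 𝒜, τ ≤ ∑ z ∈ A, w z) :
    ∃ S ⊆ Z, (#S : ℝ) ≤ (∑ z ∈ Z, w z) / τ * (Real.log #𝒜 + 1) ∧
      ∀ A ∈ 𝒜, ¬ Disjoint A S := by
  classical
  set W := ∑ z ∈ Z, w z with hW
  obtain rfl | ⟨A₀, hA₀⟩ := 𝒜.eq_empty_or_nonempty
  · exact ⟨∅, empty_subset _, by simpa using div_nonneg (sum_nonneg hw) hτ₀.le, by simp⟩
  have hτW : τ ≤ W := (hτ A₀ hA₀).trans
    (sum_le_sum_of_subset_of_nonneg (h𝒜 A₀ hA₀) fun z hz _ ↦ hw z hz)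
  have hcard : (0 : ℝ) < #𝒜 := by exact_mod_cast card_pos.2 ⟨A₀, hA₀⟩
  set m := ⌊W / τ * Real.log #𝒜⌋₊ + 1
  have hm_gt : W / τ * Real.log #𝒜 < m := by exact_mod_cast Nat.lt_floor_add_one _
  have hm_le : (m : ℝ) ≤ W / τ * Real.log #𝒜 + 1 := by
    push_cast [m]
    gcongr
    have hW₀ : 0 ≤ W / τ := div_nonneg (hτ₀.le.trans hτW) hτ₀.le
    exact Nat.floor_le (mul_nonneg hW₀ (Real.log_natCast_nonneg _))
  obtain ⟨S, hSZ, hSm, hS⟩ :=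
    exists_card_filter_disjoint_le_mul_exp (hτ₀.trans_le hτW) hw h𝒜 hτ m
  refine ⟨S, hSZ, ?_, ?_⟩
  · calc (#S : ℝ) ≤ m := by exact_mod_cast hSm
      _ ≤ W / τ * Real.log #𝒜 + 1 := hm_le
      _ ≤ W / τ * Real.log #𝒜 + W / τ := by gcongr; rwa [one_le_div hτ₀]
      _ = W / τ * (Real.log #𝒜 + 1) := by ring
  · have hlog : Real.log #𝒜 < m * (τ / W) := by
      rwa [← div_lt_iff₀ (div_pos hτ₀ (hτ₀.trans_le hτW)), div_div_eq_mul_div, mul_comm,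
        mul_div_right_comm]
    have hlt : (#{A ∈ 𝒜 | Disjoint A S} : ℝ) < 1 := by
      calc (#{A ∈ 𝒜 | Disjoint A S} : ℝ) ≤ #𝒜 * Real.exp (-(m * (τ / W))) := hS
        _ < #𝒜 * Real.exp (-Real.log #𝒜) := by gcongr
        _ = 1 := by rw [Real.exp_neg, Real.exp_log hcard, mul_inv_cancel₀ hcard.ne']
    rw [Nat.cast_lt_one, card_eq_zero, filter_eq_empty_iff] at hlt
    exact fun A hA ↦ hlt hA

end HittingSet

lemma exists_sum_range_le_lt_and_sum_Ico_le_lt {f : ℕ → ℝ} (hf : ∀ i, 0 ≤ f i) {T : ℝ}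
    (hT : 0 ≤ T) {m : ℕ} (h : 2 * T < ∑ i ∈ range m, f i) :
    ∃ a b, a ≤ b ∧ b < m ∧ ∑ i ∈ range a, f i ≤ T ∧ T < ∑ i ∈ range (a + 1), f i ∧
      ∑ i ∈ Ico (b + 1) m, f i ≤ T ∧ T < ∑ i ∈ Ico b m, f i := by
  have hmono {i j : ℕ} (hij : i ≤ j) : ∑ k ∈ range i, f k ≤ ∑ k ∈ range j, f k :=
    sum_le_sum_of_subset_of_nonneg (range_subset_range.2 hij) fun k _ _ ↦ hf k
  obtain ⟨a, ha, ha'⟩ := Nat.exists_not_and_succ_of_not_zero_of_exists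
    (p := fun i ↦ T < ∑ j ∈ range i, f j) (by simpa using hT) ⟨m, by linarith⟩
  obtain ⟨b, hb, hb'⟩ := Nat.exists_not_and_succ_of_not_zero_of_exists
    (p := fun i ↦ ∑ j ∈ range m, f j - T ≤ ∑ j ∈ range i, f j)
    (by rw [sum_range_zero]; linarith) ⟨m, by linarith⟩
  rw [not_lt] at ha
  rw [not_le] at hb
  have hbm : b < m := by
    by_contra! hmb
    linarith [hmono hmb]
  have hIco {i : ℕ} (hi : i ≤ m) :
      ∑ j ∈ range i, f j + ∑ j ∈ Ico i m, f j = ∑ j ∈ range m, f j := sum_range_add_sum_Ico f hi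
  have hIcob := hIco hbm.le
  have hIcob' := hIco (i := b + 1) hbm
  refine ⟨a, b, ?_, hbm, ha, ha', by linarith, by linarith⟩
  by_contra! hba
  linarith [hmono (i := b + 1) hba]

/-- A subgraph of maximal potential `Φ` among those that paid at most `K` edges per unit of
potential cannot be improved, so it is good. -/
lemma exists_good_numEdges_le [Finite V] {G H₀ : SimpleGraph V} {Good : SimpleGraph V → Prop}
    {Φ : SimpleGraph V → ℝ} {K B : ℝ} (hH₀ : H₀ ≤ G) (hK : 0 ≤ K) (hΦ : 0 ≤ Φ H₀)
    (hB : ∀ H, Φ H ≤ B)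
    (himprove : ∀ H, H₀ ≤ H → H ≤ G → ¬ Good H →
      ∃ F ≤ G, Φ H < Φ (H ⊔ F) ∧ numEdges F ≤ K * (Φ (H ⊔ F) - Φ H)) :
    ∃ H, H₀ ≤ H ∧ H ≤ G ∧ Good H ∧ numEdges H ≤ numEdges H₀ + K * B := by
  obtain ⟨H, ⟨hle, hHG, hpaid⟩, hmax⟩ := Set.exists_max_image
    {H : SimpleGraph V | H₀ ≤ H ∧ H ≤ G ∧ numEdges H ≤ numEdges H₀ + K * Φ H} Φ (Set.toFinite _)
    ⟨H₀, le_rfl, hH₀, by nlinarith⟩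
  refine ⟨H, hle, hHG, ?_, hpaid.trans (by gcongr; exact hB H)⟩
  by_contra hbad
  obtain ⟨F, hFG, hlt, hcost⟩ := himprove H hle hHG hbad
  refine (hmax (H ⊔ F) ⟨hle.trans le_sup_left, sup_le hHG hFG, ?_⟩).not_gt hlt
  linarith [numEdges_sup_le H F]

section Repair

variable {G H H' : SimpleGraph V} {b b' : ℝ} {e e' : ℕ} {s t : V}

/-- Adding at most `b` edges of `G` to `H` brings the distance from `s` to `t` within `e` of their
distance in `G`. -/
def Repairable (G H : SimpleGraph V) (b : ℝ) (e : ℕ) (s t : V) : Prop :=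
  ∃ F ≤ G, numEdges F ≤ b ∧ (H ⊔ F).edist s t ≤ G.edist s t + e

lemma Repairable.mono (h : Repairable G H b e s t) (hH : H ≤ H') (hb : b ≤ b') (he : e ≤ e') :
    Repairable G H' b' e' s t := by
  obtain ⟨F, hFG, hFb, hF⟩ := h
  refine ⟨F, hFG, hFb.trans hb, (edist_anti (sup_le_sup_right hH F)).trans (hF.trans ?_)⟩
  gcongr

/-- Adding at most `b` edges of `G` to its subgraph `H` repairs any given pair at distance at most
`ℓ`, up to an additive error `e`. -/
structure IsPrespanner (G H : SimpleGraph V) (ℓ : ℕ) (b : ℝ) (e : ℕ) : Prop where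
  le : H ≤ G
  repairable {s t : V} : G.edist s t ≤ ℓ → Repairable G H b e s t

end Repair

section Scaffold

variable {G H₀ : SimpleGraph V} {r c e m : ℕ} {M : ℝ} {D : BallCover G r c}
  {s t : V} {u : ℕ → V}

/-- `H₀` connects every center to its cluster by paths of length at most `c * r`, and is repairable
for all pairs at distance at most `r`, at a cost proportional to the size of the cluster. -/
structure BallCover.IsScaffold (D : BallCover G r c) (H₀ : SimpleGraph V) (e : ℕ) (M : ℝ) :
    Prop where
  le : H₀ ≤ G
  edist_center_le {z x : V} : z ∈ D.centers → x ∈ D.cluster z → H₀.edist z x ≤ (c * r : ℕ)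
  repairable {x y : V} : G.edist x y ≤ r →
    Repairable G H₀ (D.weight (D.home x) / M) e x y

lemma BallCover.IsScaffold.exists_forall_edist_le (hS : D.IsScaffold H₀ e M)
    (hu : GeodesicNet G r s t m u) (a b : ℕ) :
    ∃ F ≤ G, numEdges F ≤ (∑ i ∈ Ico a b, D.weight (D.home (u i))) / M ∧
      ∀ i j, a ≤ i → i ≤ j → j ≤ b →
        (H₀ ⊔ F).edist (u i) (u j) ≤ G.edist (u i) (u j) + ((j - i) * e : ℕ) := by
  choose F hFG hFb hF using fun i ↦ hS.repairable (hu.edist_succ_le i)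
  refine ⟨(Ico a b).sup F, Finset.sup_le fun i _ ↦ hFG i, ?_, fun i j hai hij ↦ ?_⟩
  · rw [sum_div]
    exact (numEdges_finset_sup_le _ _).trans (sum_le_sum fun i _ ↦ hFb i)
  · induction j, hij using Nat.le_induction with
    | base => simp
    | succ j hij ih =>
      intro hjb
      have hstep : (H₀ ⊔ (Ico a b).sup F).edist (u j) (u (j + 1)) ≤
          G.edist (u j) (u (j + 1)) + e :=
        (edist_anti (sup_le_sup_left (le_sup (mem_Ico.2 ⟨by omega, by omega⟩)) H₀)).trans (hF j)
      calc (H₀ ⊔ (Ico a b).sup F).edist (u i) (u (j + 1))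
          ≤ (G.edist (u i) (u j) + ((j - i) * e : ℕ)) + (G.edist (u j) (u (j + 1)) + e) :=
            SimpleGraph.edist_triangle.trans (add_le_add (ih (by omega)) hstep)
        _ = G.edist (u i) (u (j + 1)) + ((j + 1 - i) * e : ℕ) := by
            rw [add_add_add_comm, hu.edist_add hij j.le_succ, Nat.succ_sub hij, Nat.succ_mul,
              Nat.cast_add]

/-- Net vertices with the same home are within `2 * c * r` of each other, whereas the net is
`r`-separated. -/
lemma GeodesicNet.card_filter_home_eq_le [DecidableEq V] (hu : GeodesicNet G r s t m u)
    (D : BallCover G r c) (hr : 0 < r) (z : V) : #{i ∈ range m | D.home (u i) = z} ≤ 2 * c + 1 := by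
  obtain h | h := ({i ∈ range m | D.home (u i) = z} : Finset ℕ).eq_empty_or_nonempty
  · simp [h]
  obtain ⟨i₀, hi₀, hmin⟩ := exists_min_image _ id h
  have hmem {i : ℕ} (hi : i ∈ ({i ∈ range m | D.home (u i) = z} : Finset ℕ)) :
      i < m ∧ G.edist z (u i) ≤ (c * r : ℕ) := by
    obtain ⟨him, hz⟩ := mem_filter.1 hi
    exact ⟨mem_range.1 him, hz ▸ D.edist_le_of_mem_cluster (D.mem_cluster_home (u i))⟩
  have hsub : ({i ∈ range m | D.home (u i) = z} : Finset ℕ) ⊆ Icc i₀ (i₀ + 2 * c) := by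
    intro i hi
    refine mem_Icc.2 ⟨hmin i hi, ?_⟩
    have hsep : ((i - i₀) * r : ℕ) ≤ ((2 * c) * r : ℕ) := by
      rw [← Nat.cast_le (α := ℕ∞)]
      calc (((i - i₀) * r : ℕ) : ℕ∞) ≤ G.edist (u i₀) (u i) :=
            hu.separated (hmin i hi) (hmem hi).1
        _ ≤ G.edist z (u i₀) + G.edist z (u i) := by
            rw [SimpleGraph.edist_comm (u := z)]
            exact SimpleGraph.edist_triangle
        _ ≤ (c * r : ℕ) + (c * r : ℕ) := add_le_add (hmem hi₀).2 (hmem hi).2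
        _ = ((2 * c) * r : ℕ) := by norm_cast; ring
    have := Nat.le_of_mul_le_mul_right hsep hr
    omega
  calc _ ≤ #(Icc i₀ (i₀ + 2 * c)) := card_le_card hsub
    _ = 2 * c + 1 := by rw [Nat.card_Icc]; omega

lemma GeodesicNet.sum_weight_home_le [DecidableEq V] (hu : GeodesicNet G r s t m u)
    (D : BallCover G r c) (hr : 0 < r) {I : Finset ℕ} (hI : I ⊆ range m) :
    ∑ i ∈ I, D.weight (D.home (u i)) ≤
      (2 * c + 1) * ∑ z ∈ I.image (fun i ↦ D.home (u i)), D.weight z := by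
  rw [sum_comp D.weight, mul_sum]
  refine sum_le_sum fun z _ ↦ ?_
  rw [nsmul_eq_mul]
  refine mul_le_mul_of_nonneg_right ?_ (D.weight_nonneg z)
  exact_mod_cast (card_le_card (filter_subset_filter _ hI)).trans
    (hu.card_filter_home_eq_le D hr z)

end Scaffold

section Potential

variable {G H H' : SimpleGraph V} {r c A : ℕ} {D : BallCover G r c} {S : Finset V}

open Classical in
/-- The potential of path buying: the pairs in `S × D.centers` that `H` connects up to an additive
error `A`, each counted with the weight of the second center. -/
noncomputable def BallCover.potential (D : BallCover G r c) (S : Finset V) (A : ℕ)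
    (H : SimpleGraph V) : ℝ :=
  ∑ z ∈ D.centers, #{s ∈ S | H.edist s z ≤ G.edist s z + A} * D.weight z

lemma BallCover.potential_nonneg : 0 ≤ D.potential S A H :=
  sum_nonneg fun z _ ↦ mul_nonneg (Nat.cast_nonneg _) (D.weight_nonneg z)

lemma BallCover.potential_le : D.potential S A H ≤ #S * D.volume := by
  rw [volume, mul_sum]
  refine sum_le_sum fun z _ ↦ mul_le_mul_of_nonneg_right ?_ (D.weight_nonneg z)
  exact_mod_cast card_le_card (filter_subset _ _)

lemma BallCover.potential_add_le (hHH' : H ≤ H') {Z : Finset V} (hZ : Z ⊆ D.centers)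
    (hnew : ∀ z ∈ Z, ∃ s ∈ S, H'.edist s z ≤ G.edist s z + A ∧
      ¬ H.edist s z ≤ G.edist s z + A) :
    D.potential S A H + ∑ z ∈ Z, D.weight z ≤ D.potential S A H' := by
  classical
  rw [potential, potential, ← inter_eq_right.2 hZ, ← sum_ite_mem, ← sum_add_distrib]
  refine sum_le_sum fun z _ ↦ ?_
  have hsub : ({s ∈ S | H.edist s z ≤ G.edist s z + A} : Finset V) ⊆
      {s ∈ S | H'.edist s z ≤ G.edist s z + A} :=
    monotone_filter_right S fun s _ hs ↦ (edist_anti hHH').trans hs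
  split_ifs with hzZ
  · obtain ⟨s, hs, hs', hsn⟩ := hnew z hzZ
    have hlt : #{s ∈ S | H.edist s z ≤ G.edist s z + A} + 1 ≤
        #{s ∈ S | H'.edist s z ≤ G.edist s z + A} :=
      card_lt_card ((ssubset_iff_of_subset hsub).2
        ⟨s, mem_filter.2 ⟨hs, hs'⟩, fun h ↦ hsn (mem_filter.1 h).2⟩)
    rw [← add_one_mul]
    exact mul_le_mul_of_nonneg_right (by exact_mod_cast hlt) (D.weight_nonneg z)
  · rw [add_zero]
    exact mul_le_mul_of_nonneg_right (by exact_mod_cast card_le_card hsub) (D.weight_nonneg z)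

end Potential

section PathBuying

variable {G H H₀ : SimpleGraph V} {r c e R : ℕ} {M : ℝ} {D : BallCover G r c} {S : Finset V}
  {v x₁ x₂ z₁ z₂ : V}

lemma edist_le_edist_add_of_near (hHG : H ≤ G) {a a' b b' : V} {ρ d : ℕ}
    (haa' : H.edist a a' ≤ ρ) (hbb' : H.edist b b' ≤ ρ)
    (hab : H.edist a b ≤ G.edist a b + d) :
    H.edist a' b' ≤ G.edist a' b' + (4 * ρ + d : ℕ) := by
  have hGab : G.edist a b ≤ ρ + (G.edist a' b' + ρ) := by
    refine SimpleGraph.edist_triangle.trans (add_le_add ((edist_anti hHG).trans haa') ?_)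
    refine SimpleGraph.edist_triangle.trans (add_le_add le_rfl ?_)
    rw [SimpleGraph.edist_comm]
    exact (edist_anti hHG).trans hbb'
  calc H.edist a' b' ≤ H.edist a' a + (H.edist a b + H.edist b b') :=
        SimpleGraph.edist_triangle.trans (add_le_add le_rfl SimpleGraph.edist_triangle)
    _ ≤ ρ + ((ρ + (G.edist a' b' + ρ) + d) + ρ) := by
        rw [SimpleGraph.edist_comm]
        gcongr
        exact hab.trans (by gcongr)
    _ = G.edist a' b' + (4 * ρ + d : ℕ) := by
        push_cast
        ring

lemma BallCover.IsScaffold.edist_home_le (hS : D.IsScaffold H₀ e M) (hH₀ : H₀ ≤ H) (hHG : H ≤ G)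
    {z x : V} (hz : z ∈ D.centers) (hx : x ∈ D.cluster z) {d : ℕ}
    (h : H.edist x v ≤ G.edist x v + d) :
    H.edist z (D.home v) ≤ G.edist z (D.home v) + (4 * (c * r) + d : ℕ) := by
  have hcenter {z x : V} (hz : z ∈ D.centers) (hx : x ∈ D.cluster z) :
      H.edist x z ≤ (c * r : ℕ) := by
    rw [SimpleGraph.edist_comm]
    exact (edist_anti hH₀).trans (hS.edist_center_le hz hx)
  exact edist_le_edist_add_of_near hHG (hcenter hz hx)
    (hcenter (D.home_mem v) (D.mem_cluster_home v)) h

lemma BallCover.IsScaffold.edist_le_of_edist_home_le (hS : D.IsScaffold H₀ e M) (hH₀ : H₀ ≤ H)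
    (hHG : H ≤ G) {z x : V} (hz : z ∈ D.centers) (hx : x ∈ D.cluster z) {d : ℕ}
    (h : H.edist z (D.home v) ≤ G.edist z (D.home v) + d) :
    H.edist x v ≤ G.edist x v + (4 * (c * r) + d : ℕ) :=
  edist_le_edist_add_of_near hHG ((edist_anti hH₀).trans (hS.edist_center_le hz hx))
    ((edist_anti hH₀).trans (hS.edist_center_le (D.home_mem v) (D.mem_cluster_home v))) h

/-- A geodesic from `x₁` to `x₂` through `v` splits the error between the two halves. -/
lemma BallCover.IsScaffold.exists_not_edist_home_le (hS : D.IsScaffold H₀ e M) (hH₀ : H₀ ≤ H)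
    (hHG : H ≤ G) (hz₁ : z₁ ∈ D.centers) (hz₂ : z₂ ∈ D.centers) (hx₁ : x₁ ∈ D.cluster z₁)
    (hx₂ : x₂ ∈ D.cluster z₂) (hv : G.edist x₁ v + G.edist v x₂ = G.edist x₁ x₂) {A : ℕ}
    (hfail : ¬ H.edist x₁ x₂ ≤ G.edist x₁ x₂ + (2 * (4 * (c * r) + A) : ℕ)) :
    ∃ s ∈ ({z₁, z₂} : Set V), ¬ H.edist s (D.home v) ≤ G.edist s (D.home v) + A := by
  by_contra! hgood
  have h₁ := hS.edist_le_of_edist_home_le hH₀ hHG hz₁ hx₁ (hgood z₁ (.inl rfl))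
  have h₂ := hS.edist_le_of_edist_home_le hH₀ hHG hz₂ hx₂ (hgood z₂ (.inr rfl))
  rw [SimpleGraph.edist_comm, SimpleGraph.edist_comm (G := G)] at h₂
  refine hfail (SimpleGraph.edist_triangle.trans ((add_le_add h₁ h₂).trans_eq ?_))
  rw [← hv]
  push_cast
  ring

/-- Buying a geodesic from `x₁` to `x₂` brings the homes of all its net vertices close to `z₁` and
`z₂`. -/
lemma BallCover.IsScaffold.exists_potential_lt [Finite V] (hS : D.IsScaffold H₀ e M) (hr : 0 < r)
    (hM : 0 ≤ M) (hSD : S ⊆ D.centers) (hH₀ : H₀ ≤ H) (hHG : H ≤ G) (hz₁ : z₁ ∈ S) (hz₂ : z₂ ∈ S)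
    (hx₁ : x₁ ∈ D.cluster z₁) (hx₂ : x₂ ∈ D.cluster z₂) (hx : G.edist x₁ x₂ ≤ (R * r : ℕ)) {A : ℕ}
    (hA : A = 4 * (c * r) + R * e)
    (hfail : ¬ H.edist x₁ x₂ ≤ G.edist x₁ x₂ + (2 * (4 * (c * r) + A) : ℕ)) :
    ∃ F ≤ G, D.potential S A H < D.potential S A (H ⊔ F) ∧
      numEdges F ≤ (2 * c + 1) / M * (D.potential S A (H ⊔ F) - D.potential S A H) := by
  classical
  obtain ⟨m, hmR, u, hu⟩ := exists_geodesicNet hr hx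
  obtain ⟨F, hFG, hFM, hF⟩ := hS.exists_forall_edist_le hu 0 m
  have hm : 0 < m := by
    refine Nat.pos_of_ne_zero ?_
    rintro rfl
    simp [← hu.source, ← hu.target] at hfail
  have hF' {i j : ℕ} (hij : i ≤ j) (hjm : j ≤ m) :
      (H ⊔ F).edist (u i) (u j) ≤ G.edist (u i) (u j) + (R * e : ℕ) := by
    refine (edist_anti (sup_le_sup_right hH₀ F)).trans ((hF i j i.zero_le hij hjm).trans ?_)
    gcongr
    omega
  have hbought {i : ℕ} (hi : i ≤ m) : ∀ s ∈ ({z₁, z₂} : Set V),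
      (H ⊔ F).edist s (D.home (u i)) ≤ G.edist s (D.home (u i)) + A := by
    rw [hA]
    rintro s (rfl | rfl) <;>
      refine hS.edist_home_le (hH₀.trans le_sup_left) (sup_le hHG hFG) (hSD ‹_›) ‹_› ?_
    · exact hu.source ▸ hF' i.zero_le hi
    · rw [SimpleGraph.edist_comm, SimpleGraph.edist_comm (G := G)]
      exact hu.target ▸ hF' hi le_rfl
  set Z := (range m).image fun i ↦ D.home (u i)
  have hgain : D.potential S A H + ∑ z ∈ Z, D.weight z ≤ D.potential S A (H ⊔ F) := by
    refine D.potential_add_le le_sup_left (image_subset_iff.2 fun i _ ↦ D.home_mem _) ?_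
    simp only [Z, forall_mem_image, mem_range]
    intro i hi
    have hgeo := hu.edist_add i.zero_le hi.le
    rw [hu.source, hu.target] at hgeo
    obtain ⟨s, hs, hbad⟩ :=
      hS.exists_not_edist_home_le hH₀ hHG (hSD hz₁) (hSD hz₂) hx₁ hx₂ hgeo hfail
    exact ⟨s, hs.elim (· ▸ hz₁) (· ▸ hz₂), hbought hi.le s hs, hbad⟩
  have hpos : 0 < ∑ z ∈ Z, D.weight z :=
    sum_pos (fun z _ ↦ D.weight_pos z) ((nonempty_range_iff.2 hm.ne').image _)
  refine ⟨F, hFG, by linarith, hFM.trans ?_⟩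
  rw [Nat.Ico_zero_eq_range, div_mul_eq_mul_div]
  gcongr
  exact (hu.sum_weight_home_le D hr Subset.rfl).trans (by gcongr; linarith)

lemma BallCover.IsScaffold.exists_edist_le_of_mem_cluster [Finite V] (hS : D.IsScaffold H₀ e M)
    (hr : 0 < r) (hM : 0 ≤ M) (hSD : S ⊆ D.centers) (R : ℕ) :
    ∃ H, H₀ ≤ H ∧ H ≤ G ∧
      (∀ z₁ ∈ S, ∀ z₂ ∈ S, ∀ x₁ ∈ D.cluster z₁, ∀ x₂ ∈ D.cluster z₂, G.edist x₁ x₂ ≤ (R * r : ℕ) →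
        H.edist x₁ x₂ ≤ G.edist x₁ x₂ + (2 * (4 * (c * r) + (4 * (c * r) + R * e)) : ℕ)) ∧
      numEdges H ≤ numEdges H₀ + (2 * c + 1) / M * (#S * D.volume) := by
  refine exists_good_numEdges_le (Φ := D.potential S (4 * (c * r) + R * e)) hS.le (by positivity)
    D.potential_nonneg (fun _ ↦ D.potential_le) fun H hH₀ hHG hbad ↦ ?_
  push Not at hbad
  obtain ⟨z₁, hz₁, z₂, hz₂, x₁, hx₁, x₂, hx₂, hx, hfail⟩ := hbad
  exact hS.exists_potential_lt hr hM hSD hH₀ hHG hz₁ hz₂ hx₁ hx₂ hx rfl hfail.not_ge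

end PathBuying

section Detour

variable {G H H₀ : SimpleGraph V} {r c e ℓ d : ℕ} {b : ℝ} {D : BallCover G r c}
  {s t z₁ z₂ : V}

/-- Adding at most `b` edges to `H` connects `s` to the cluster of `z₁` and the cluster of `z₂` to
`t` in such a way that following a geodesic of `G` of length at most `ℓ` between the two clusters
results in a path from `s` to `t` with additive error at most `e`. -/
def BallCover.IsDetour (D : BallCover G r c) (H : SimpleGraph V) (b : ℝ) (e ℓ : ℕ)
    (s t z₁ z₂ : V) : Prop :=
  ∃ x₁ ∈ D.cluster z₁, ∃ x₂ ∈ D.cluster z₂, G.edist x₁ x₂ ≤ ℓ ∧ ∃ F ≤ G, numEdges F ≤ b ∧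
    (H ⊔ F).edist s x₁ + G.edist x₁ x₂ + (H ⊔ F).edist x₂ t ≤ G.edist s t + e

lemma BallCover.IsDetour.repairable (h : D.IsDetour H₀ b e ℓ s t z₁ z₂) (hH₀ : H₀ ≤ H)
    (hH : ∀ x₁ ∈ D.cluster z₁, ∀ x₂ ∈ D.cluster z₂, G.edist x₁ x₂ ≤ ℓ →
      H.edist x₁ x₂ ≤ G.edist x₁ x₂ + d) : Repairable G H b (e + d) s t := by
  obtain ⟨x₁, hx₁, x₂, hx₂, hx, F, hFG, hFb, hF⟩ := h
  have hle : H₀ ⊔ F ≤ H ⊔ F := sup_le_sup_right hH₀ F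
  have hmid : (H ⊔ F).edist x₁ x₂ ≤ G.edist x₁ x₂ + d :=
    (edist_anti le_sup_left).trans (hH x₁ hx₁ x₂ hx₂ hx)
  refine ⟨F, hFG, hFb, ?_⟩
  calc (H ⊔ F).edist s t
      ≤ (H ⊔ F).edist s x₁ + ((H ⊔ F).edist x₁ x₂ + (H ⊔ F).edist x₂ t) :=
        SimpleGraph.edist_triangle.trans (add_le_add le_rfl SimpleGraph.edist_triangle)
    _ ≤ (H₀ ⊔ F).edist s x₁ + ((G.edist x₁ x₂ + d) + (H₀ ⊔ F).edist x₂ t) :=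
        add_le_add (edist_anti hle) (add_le_add hmid (edist_anti hle))
    _ = (H₀ ⊔ F).edist s x₁ + G.edist x₁ x₂ + (H₀ ⊔ F).edist x₂ t + d := by ring
    _ ≤ G.edist s t + (e + d : ℕ) := by
        rw [Nat.cast_add, ← add_assoc]
        gcongr

end Detour

section Routes

variable {G H₀ : SimpleGraph V} {r c e R m : ℕ} {M T : ℝ} {D : BallCover G r c} {s t : V}
  {u : ℕ → V}

/-- Repair the parts of the net before `u i` and after `u (j + 1)`. -/
lemma BallCover.IsScaffold.isDetour_home (hS : D.IsScaffold H₀ e M) (hM : 0 ≤ M)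
    (hu : GeodesicNet G r s t m u) (hmR : m ≤ R) (hst : G.edist s t ≤ (R * r : ℕ)) {a b i j : ℕ}
    (hab : a ≤ b) (ha : ∑ k ∈ range a, D.weight (D.home (u k)) ≤ T)
    (hb : ∑ k ∈ Ico (b + 1) m, D.weight (D.home (u k)) ≤ T)
    (hia : i ≤ a) (hbj : b ≤ j) (hjm : j < m) :
    D.IsDetour H₀ (2 * T / M) (R * e) (R * r) s t (D.home (u i)) (D.home (u j)) := by
  obtain ⟨F₁, hF₁G, hF₁M, hF₁⟩ := hS.exists_forall_edist_le hu 0 a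
  obtain ⟨F₂, hF₂G, hF₂M, hF₂⟩ := hS.exists_forall_edist_le hu (b + 1) m
  have hsi : (H₀ ⊔ (F₁ ⊔ F₂)).edist s (u i) ≤ G.edist s (u i) + (i * e : ℕ) := by
    have := hF₁ 0 i le_rfl i.zero_le hia
    rw [hu.source, Nat.sub_zero] at this
    exact (edist_anti (sup_le_sup_left le_sup_left H₀)).trans this
  have hjt : (H₀ ⊔ (F₁ ⊔ F₂)).edist (u (j + 1)) t ≤
      G.edist (u (j + 1)) t + ((m - (j + 1)) * e : ℕ) := by
    have := hF₂ (j + 1) m (by omega) hjm le_rfl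
    rw [hu.target] at this
    exact (edist_anti (sup_le_sup_left le_sup_right H₀)).trans this
  have hgeo : G.edist s (u i) + (G.edist (u i) (u (j + 1)) + G.edist (u (j + 1)) t) =
      G.edist s t := by
    rw [← hu.source, ← hu.target, hu.edist_add (by omega) hjm, hu.edist_add i.zero_le (by omega)]
  have hmid : G.edist (u i) (u (j + 1)) ≤ G.edist s t :=
    hgeo ▸ le_self_add.trans le_add_self
  refine ⟨u i, D.mem_cluster_home _, u (j + 1), D.mem_cluster_home_of_edist_le (hu.edist_succ_le j),
    hmid.trans hst, F₁ ⊔ F₂, sup_le hF₁G hF₂G, ?_, ?_⟩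
  · calc numEdges (F₁ ⊔ F₂) ≤ T / M + T / M := by
          refine (numEdges_sup_le _ _).trans (add_le_add ?_ ?_)
          · exact hF₁M.trans (by rw [Nat.Ico_zero_eq_range]; gcongr)
          · exact hF₂M.trans (by gcongr)
      _ = 2 * T / M := by ring
  · have herr : i * e + (m - (j + 1)) * e ≤ R * e := by
      rw [← Nat.add_mul]
      exact Nat.mul_le_mul_right e (by omega)
    calc _ ≤ (G.edist s (u i) + (i * e : ℕ)) + G.edist (u i) (u (j + 1)) +
          (G.edist (u (j + 1)) t + ((m - (j + 1)) * e : ℕ)) := by gcongr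
      _ = G.edist s t + (i * e + (m - (j + 1)) * e : ℕ) := by
          rw [← hgeo, Nat.cast_add]
          ring
      _ ≤ G.edist s t + (R * e : ℕ) := by gcongr

/-- If repairing the whole net is too expensive, split off a prefix and a suffix of weight about
`T`. -/
lemma BallCover.IsScaffold.repairable_or_isDetour (hS : D.IsScaffold H₀ e M) (hr : 0 < r)
    (hM : 0 ≤ M) (hT : 0 ≤ T) (hst : G.edist s t ≤ (R * r : ℕ)) :
    Repairable G H₀ (2 * T / M) (R * e) s t ∨
      ∃ A ⊆ D.centers, ∃ B ⊆ D.centers, T / (2 * c + 1) ≤ ∑ z ∈ A, D.weight z ∧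
        T / (2 * c + 1) ≤ ∑ z ∈ B, D.weight z ∧
        ∀ z₁ ∈ A, ∀ z₂ ∈ B, D.IsDetour H₀ (2 * T / M) (R * e) (R * r) s t z₁ z₂ := by
  classical
  obtain ⟨m, hmR, u, hu⟩ := exists_geodesicNet hr hst
  obtain hle | hlt := le_or_gt (∑ i ∈ range m, D.weight (D.home (u i))) (2 * T)
  · left
    obtain ⟨F, hFG, hFM, hF⟩ := hS.exists_forall_edist_le hu 0 m
    refine ⟨F, hFG, hFM.trans (by rw [Nat.Ico_zero_eq_range]; gcongr), ?_⟩
    have hFst := hF 0 m le_rfl m.zero_le le_rfl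
    rw [hu.source, hu.target, Nat.sub_zero] at hFst
    exact hFst.trans (by gcongr)
  · right
    obtain ⟨a, b, hab, hbm, ha, ha', hb, hb'⟩ :=
      exists_sum_range_le_lt_and_sum_Ico_le_lt (fun i ↦ D.weight_nonneg (D.home (u i))) hT hlt
    have hcenters {I : Finset ℕ} : I.image (fun i ↦ D.home (u i)) ⊆ D.centers :=
      image_subset_iff.2 fun i _ ↦ D.home_mem _
    have hweight {I : Finset ℕ} (hI : I ⊆ range m) (hTI : T < ∑ i ∈ I, D.weight (D.home (u i))) :
        T / (2 * c + 1) ≤ ∑ z ∈ I.image fun i ↦ D.home (u i), D.weight z :=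
      div_le_of_le_mul₀ (by positivity) (sum_nonneg fun z _ ↦ D.weight_nonneg z)
        (by simpa only [mul_comm] using hTI.le.trans (hu.sum_weight_home_le D hr hI))
    refine ⟨(range (a + 1)).image fun i ↦ D.home (u i), hcenters,
      (Ico b m).image fun i ↦ D.home (u i), hcenters,
      hweight (range_subset_range.2 (by omega)) ha', hweight (fun i hi ↦ ?_) hb', ?_⟩
    · exact mem_range.2 (mem_Ico.1 hi).2
    · simp only [forall_mem_image, mem_range, mem_Ico]
      intro i hi j hj
      exact hS.isDetour_home hM hu hmR hst hab ha hb (by omega) hj.1 hj.2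

end Routes

section HitDetours

variable [Finite V] {G H₀ : SimpleGraph V} {r c e : ℕ} {M T : ℝ} {D : BallCover G r c}

lemma log_natCast_le_log_natCast {a b : ℕ} (h : a ≤ b) : Real.log a ≤ Real.log b := by
  obtain rfl | ha := a.eq_zero_or_pos
  · rw [Nat.cast_zero, Real.log_zero]
    exact Real.log_natCast_nonneg b
  · exact Real.log_le_log (Nat.cast_pos.2 ha) (Nat.cast_le.2 h)

lemma BallCover.IsScaffold.exists_forall_repairable_or_isDetour
    (hS : D.IsScaffold H₀ e M) (hr : 0 < r) (hM : 0 ≤ M) (hT : 0 < T) (R : ℕ) :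
    ∃ S ⊆ D.centers,
      #S ≤ D.volume / (T / (2 * c + 1)) * (Real.log (2 * Nat.card V ^ 2 : ℕ) + 1) ∧
      ∀ s t, G.edist s t ≤ (R * r : ℕ) → Repairable G H₀ (2 * T / M) (R * e) s t ∨
        ∃ z₁ ∈ S, ∃ z₂ ∈ S, D.IsDetour H₀ (2 * T / M) (R * e) (R * r) s t z₁ z₂ := by
  classical
  have := Fintype.ofFinite V
  let I : Finset (V × V) := {p | G.edist p.1 p.2 ≤ (R * r : ℕ) ∧
    ¬ Repairable G H₀ (2 * T / M) (R * e) p.1 p.2}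
  have hI (p : V × V) (hp : p ∈ I) := by
    obtain ⟨hle, hnot⟩ := (mem_filter_univ p).1 hp
    exact (hS.repairable_or_isDetour hr hM hT.le hle).resolve_left hnot
  choose! A hA B hB hAT hBT hdetour using hI
  have h𝒜 : ∀ C ∈ I.image A ∪ I.image B,
      C ⊆ D.centers ∧ T / (2 * c + 1) ≤ ∑ z ∈ C, D.weight z := by
    simp only [mem_union, mem_image]
    rintro _ (⟨p, hp, rfl⟩ | ⟨p, hp, rfl⟩)
    exacts [⟨hA p hp, hAT p hp⟩, ⟨hB p hp, hBT p hp⟩]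
  obtain ⟨S, hSD, hScard, hShit⟩ := exists_hitting_set (fun z _ ↦ D.weight_nonneg z)
    (fun C hC ↦ (h𝒜 C hC).1) (by positivity) (fun C hC ↦ (h𝒜 C hC).2)
  have hcard : #(I.image A ∪ I.image B) ≤ 2 * Nat.card V ^ 2 := by
    have hIcard : #I ≤ Nat.card V ^ 2 := by
      simpa [sq] using card_le_univ I
    linarith [card_union_le (I.image A) (I.image B), card_image_le (s := I) (f := A),
      card_image_le (s := I) (f := B)]
  refine ⟨S, hSD, hScard.trans ?_, fun s t hst ↦ or_iff_not_imp_left.2 fun hnot ↦ ?_⟩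
  · have := D.volume_nonneg
    exact mul_le_mul_of_nonneg_left (add_le_add_left (log_natCast_le_log_natCast hcard) 1)
      (by positivity)
  · have hp : (s, t) ∈ I := (mem_filter_univ _).2 ⟨hst, hnot⟩
    obtain ⟨z₁, hz₁, hz₁S⟩ := not_disjoint_iff.1
      (hShit _ (mem_union_left _ (mem_image_of_mem A hp)))
    obtain ⟨z₂, hz₂, hz₂S⟩ := not_disjoint_iff.1
      (hShit _ (mem_union_right _ (mem_image_of_mem B hp)))
    exact ⟨z₁, hz₁S, z₂, hz₂S, hdetour _ hp z₁ hz₁ z₂ hz₂⟩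

lemma BallCover.IsScaffold.exists_isPrespanner (hS : D.IsScaffold H₀ e M) (hr : 0 < r)
    (hM : 0 ≤ M) (hT : 0 < T) (R : ℕ) :
    ∃ H, IsPrespanner G H (R * r) (2 * T / M) (3 * (R * e) + 16 * (c * r)) ∧
      numEdges H ≤ numEdges H₀ + (2 * c + 1) ^ 2 *
        (Real.log (2 * Nat.card V ^ 2 : ℕ) + 1) * D.volume ^ 2 / (M * T) := by
  obtain ⟨S, hSD, hScard, hS_repair⟩ := hS.exists_forall_repairable_or_isDetour hr hM hT R
  obtain ⟨H, hH₀, hHG, hH, hHedges⟩ := hS.exists_edist_le_of_mem_cluster hr hM hSD R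
  refine ⟨H, ⟨hHG, fun {s t} hst ↦ ?_⟩, hHedges.trans ?_⟩
  · obtain h | ⟨z₁, hz₁, z₂, hz₂, hdetour⟩ := hS_repair s t hst
    · exact h.mono hH₀ le_rfl (by omega)
    · exact (hdetour.repairable hH₀ (hH z₁ hz₁ z₂ hz₂)).mono le_rfl le_rfl (by omega)
  · have := D.volume_nonneg
    calc numEdges H₀ + (2 * c + 1) / M * (#S * D.volume)
        ≤ numEdges H₀ + (2 * c + 1) / M * (D.volume / (T / (2 * c + 1)) *
            (Real.log (2 * Nat.card V ^ 2 : ℕ) + 1) * D.volume) := by gcongr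
      _ = numEdges H₀ + (2 * c + 1) ^ 2 * (Real.log (2 * Nat.card V ^ 2 : ℕ) + 1) *
            D.volume ^ 2 / (M * T) := by
          field_simp

end HitDetours

section Prespanner

variable {G : SimpleGraph V} {r c e J : ℕ} {M d a b β Q : ℝ}

lemma Repairable.spanningCoe {s : Set V} {H : SimpleGraph s} {x y : s}
    (h : Repairable (G.induce s) H b e x y) (hxy : (G.induce s).edist x y ≤ G.edist (x : V) y) :
    Repairable G H.spanningCoe b e (x : V) y := by
  obtain ⟨F, hFG, hFb, hF⟩ := h
  refine ⟨F.spanningCoe, (SimpleGraph.map_monotone _ hFG).trans (G.spanningCoe_induce_le s),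
    (numEdges_spanningCoe F).trans_le hFb, ?_⟩
  have hsup : (H ⊔ F).spanningCoe ≤ H.spanningCoe ⊔ F.spanningCoe :=
    (SimpleGraph.map_le_iff_le_comap _ _ _).2 (sup_le
      ((SimpleGraph.map_le_iff_le_comap _ _ _).1 le_sup_left)
      ((SimpleGraph.map_le_iff_le_comap _ _ _).1 le_sup_right))
  calc _ ≤ (H ⊔ F).edist x y := (edist_anti hsup).trans (edist_spanningCoe_le _ x y)
    _ ≤ G.edist (x : V) y + e := hF.trans (by gcongr)

/-- Combine prespanners of the clusters with breadth-first search trees of the clusters. -/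
lemma BallCover.exists_isScaffold [Finite V] (D : BallCover G r c)
    (h : ∀ z, ∃ H, IsPrespanner (G.induce (D.cluster z)) H r (D.weight z / M) e ∧
      numEdges H ≤ a * D.weight z) :
    ∃ H₀, D.IsScaffold H₀ e M ∧ numEdges H₀ ≤ (a + 1) * D.volume := by
  choose H hH hHa using h
  choose T hTG hTcard hT using fun z ↦ exists_le_forall_edist_le G z (D.radius z)
  let H₀ := D.centers.sup fun z ↦ (H z).spanningCoe ⊔ T z
  have hle {z : V} (hz : z ∈ D.centers) : (H z).spanningCoe ⊔ T z ≤ H₀ :=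
    le_sup (f := fun z ↦ (H z).spanningCoe ⊔ T z) hz
  refine ⟨H₀, ⟨?_, fun {z x} hz hx ↦ ?_,
    fun {x y} hxy ↦ ?_⟩, ?_⟩
  · exact Finset.sup_le fun z _ ↦ sup_le
      ((SimpleGraph.map_monotone _ (hH z).le).trans (G.spanningCoe_induce_le _)) (hTG z)
  · exact (edist_anti (le_sup_right.trans (hle hz))).trans
      ((hT z x hx).trans (D.edist_le_of_mem_cluster hx))
  · have hinduce := edist_induce_le (D.mem_cluster_home x) (D.mem_cluster_home_of_edist_le hxy)
      fun w hw ↦ D.mem_cluster_home_of_edist_le (hw.trans hxy)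
    refine (((hH (D.home x)).repairable (hinduce.trans hxy)).spanningCoe hinduce).mono ?_ le_rfl
      le_rfl
    exact le_sup_left.trans (hle (D.home_mem x))
  · rw [volume, mul_sum]
    refine (numEdges_finset_sup_le _ _).trans (sum_le_sum fun z _ ↦ ?_)
    calc _ ≤ numEdges (H z).spanningCoe + numEdges (T z) := numEdges_sup_le _ _
      _ ≤ a * D.weight z + D.weight z :=
          add_le_add ((numEdges_spanningCoe _).trans_le (hHa z)) (hTcard z)
      _ = (a + 1) * D.weight z := by ring

lemma exists_isPrespanner_one [Finite V] (G : SimpleGraph V) (hd : 0 < d) :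
    ∃ H, IsPrespanner G H 1 (Nat.card V / d) 0 ∧ numEdges H ≤ Nat.card V * d := by
  obtain hlt | hle := lt_or_ge (Nat.card V : ℝ) d
  · refine ⟨G, ⟨le_rfl, fun _ ↦ ⟨⊥, bot_le, ?_, by simp⟩⟩, ?_⟩
    · rw [numEdges_bot]
      positivity
    · exact (numEdges_le_card_sq G).trans (by rw [sq]; gcongr)
  · refine ⟨⊥, ⟨bot_le, fun {s t} hst ↦ ?_⟩, by rw [numEdges_bot]; positivity⟩
    have hst' : G.Adj s t ∨ s = t := edist_le_one_iff_adj_or_eq.1 (by exact_mod_cast hst)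
    refine ⟨edge s t, (edge_le_iff G).2 hst'.symm,
      (numEdges_edge_le_one s t).trans ((one_le_div hd).2 hle), ?_⟩
    obtain hadj | rfl := hst'
    · rw [edist_eq_one_iff_adj.2 hadj, bot_sup_eq,
        edist_eq_one_iff_adj.2 (by simp [edge_adj, hadj.ne])]
      simp
    · simp

lemma exists_isPrespanner_mul [Finite V] [Nonempty V] (G : SimpleGraph V) (hr : 0 < r) (R : ℕ)
    (hβ : 0 ≤ β) (hJ : 1 ≤ J) (hcard : (Nat.card V : ℝ) ≤ β ^ J) (hM : 0 < M) (hd : 0 < d)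
    (ha : 0 ≤ a) (hQ : 2 * (2 * 4 ^ J + 1) ^ 2 * (Real.log (2 * Nat.card V ^ 2 : ℕ) + 1) ≤ Q)
    (h : ∀ s : Set V, s.Nonempty → ∃ H, IsPrespanner (G.induce s) H r (s.ncard / M) e ∧
      numEdges H ≤ a * s.ncard) :
    ∃ H, IsPrespanner G H (R * r) (Nat.card V / (M ^ 2 * d)) (3 * (R * e) + 16 * (4 ^ J * r)) ∧
      numEdges H ≤ ((a + 1) * β + Q * β ^ 2 * d) * Nat.card V := by
  obtain ⟨D, hD⟩ := exists_ballCover_volume_le G r hβ hJ hcard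
  obtain ⟨H₀, hS, hH₀⟩ := D.exists_isScaffold (M := M) (a := a) (e := e) fun z ↦
    h (D.cluster z) ⟨z, mem_closedBall_self G z _⟩
  have hn : (0 : ℝ) < Nat.card V := Nat.cast_pos.2 Nat.card_pos
  obtain ⟨H, hH, hHedges⟩ := hS.exists_isPrespanner hr hM.le
    (T := Nat.card V / (2 * (M * d))) (by positivity) R
  refine ⟨H, ⟨hH.le, fun hst ↦ (hH.repairable hst).mono le_rfl (le_of_eq ?_) le_rfl⟩,
    hHedges.trans ?_⟩
  · field_simp
  · have : 0 ≤ Real.log (2 * Nat.card V ^ 2 : ℕ) := Real.log_natCast_nonneg _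
    have hvol := D.volume_nonneg
    set L := Real.log (2 * Nat.card V ^ 2 : ℕ) + 1
    calc numEdges H₀ + (2 * (4 ^ J : ℕ) + 1) ^ 2 * L * D.volume ^ 2 /
          (M * (Nat.card V / (2 * (M * d))))
        ≤ (a + 1) * (β * Nat.card V) + (2 * (4 ^ J : ℕ) + 1) ^ 2 * L * (β * Nat.card V) ^ 2 /
          (M * (Nat.card V / (2 * (M * d)))) := by
          gcongr
          exact hH₀.trans (by gcongr)
      _ = ((a + 1) * β + (2 * (2 * 4 ^ J + 1) ^ 2 * L) * β ^ 2 * d) * Nat.card V := by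
          push_cast
          field_simp
      _ ≤ ((a + 1) * β + Q * β ^ 2 * d) * Nat.card V := by gcongr

/-- The additive error of the prespanner of range `R ^ k` built from ball covers whose clusters
have radius at most `c` times the range of the previous prespanner. -/
def additiveError (c R : ℕ) : ℕ → ℕ
  | 0 => 0
  | k + 1 => 3 * (R * additiveError c R k) + 16 * (c * R ^ k)

theorem exists_isPrespanner_pow [Finite V] [Nonempty V] (G : SimpleGraph V) {R : ℕ} (hR : 0 < R)
    (hβ : 1 ≤ β) (hJ : 1 ≤ J) (hcard : (Nat.card V : ℝ) ≤ β ^ J) (hd : 1 ≤ d)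
    (hQ : 2 * (2 * 4 ^ J + 1) ^ 2 * (Real.log (2 * Nat.card V ^ 2 : ℕ) + 1) ≤ Q) (k : ℕ) :
    ∃ H, IsPrespanner G H (R ^ k) (Nat.card V / d ^ (2 ^ (k + 1) - 1))
        (additiveError (4 ^ J) R k) ∧
      numEdges H ≤ (1 + 2 * k) * Q * β ^ (k + 1) * d * Nat.card V := by
  have hQ₁ : 1 ≤ Q := by
    have hlog : 0 ≤ Real.log (2 * Nat.card V ^ 2 : ℕ) := Real.log_natCast_nonneg _
    have hJ' : (1 : ℝ) ≤ (2 * 4 ^ J + 1) ^ 2 := one_le_pow₀ (le_add_of_nonneg_left (by positivity))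
    nlinarith
  induction k generalizing V with
  | zero =>
    obtain ⟨H, hH, hHedges⟩ := exists_isPrespanner_one G (zero_lt_one.trans_le hd)
    refine ⟨H, by simpa [additiveError] using hH, hHedges.trans ?_⟩
    calc (Nat.card V : ℝ) * d ≤ (Q * β) * (Nat.card V * d) :=
          le_mul_of_one_le_left (by positivity) (one_le_mul_of_one_le_of_one_le hQ₁ hβ)
      _ = (1 + 2 * (0 : ℕ)) * Q * β ^ (0 + 1) * d * Nat.card V := by
          push_cast
          ring
  | succ k ih =>
    have hcluster (s : Set V) (hs : s.Nonempty) :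
        ∃ H, IsPrespanner (G.induce s) H (R ^ k) (s.ncard / d ^ (2 ^ (k + 1) - 1))
            (additiveError (4 ^ J) R k) ∧
          numEdges H ≤ (1 + 2 * k) * Q * β ^ (k + 1) * d * s.ncard := by
      have := hs.to_subtype
      have hle : Nat.card s ≤ Nat.card V := Finite.card_subtype_le _
      have hQs : 2 * (2 * 4 ^ J + 1) ^ 2 * (Real.log (2 * Nat.card s ^ 2 : ℕ) + 1) ≤ Q := by
        refine (mul_le_mul_of_nonneg_left (add_le_add_left ?_ 1) (by positivity)).trans hQ
        exact log_natCast_le_log_natCast (by gcongr)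
      exact ih (G.induce s) ((Nat.cast_le.2 hle).trans hcard) hQs
    obtain ⟨H, hH, hHedges⟩ := exists_isPrespanner_mul (d := d) G (pow_pos hR k) R
      (by positivity) hJ hcard (by positivity) (by positivity) (by positivity) hQ hcluster
    refine ⟨H, ?_, hHedges.trans ?_⟩
    · have hexp : (2 ^ (k + 1) - 1) * 2 + 1 = 2 ^ (k + 1 + 1) - 1 := by
        have := Nat.one_le_two_pow (n := k + 1)
        omega
      rwa [← pow_mul, ← pow_succ, hexp, mul_comm R, ← pow_succ] at hH
    · have hβ_le : β ≤ β ^ (k + 2) := le_self_pow₀ hβ (by omega)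
      have hQβ : β ≤ Q * β ^ (k + 2) * d := by
        rw [mul_right_comm]
        exact hβ_le.trans (le_mul_of_one_le_left (by positivity)
          (one_le_mul_of_one_le_of_one_le hQ₁ hd))
      have hβ_sq : β ^ 2 ≤ β ^ (k + 2) := pow_le_pow_right₀ hβ (by omega)
      calc (((1 + 2 * k) * Q * β ^ (k + 1) * d + 1) * β + Q * β ^ 2 * d) * Nat.card V
          = ((1 + 2 * k) * Q * β ^ (k + 2) * d + β + Q * β ^ 2 * d) * Nat.card V := by ring
        _ ≤ ((1 + 2 * k) * Q * β ^ (k + 2) * d + Q * β ^ (k + 2) * d + Q * β ^ (k + 2) * d) *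
              Nat.card V := by gcongr
        _ = (1 + 2 * (k + 1 : ℕ)) * Q * β ^ (k + 1 + 1) * d * Nat.card V := by
            push_cast
            ring

end Prespanner

section Assembly

variable {G H : SimpleGraph V} {ℓ e J : ℕ} {b β Q ε : ℝ}

lemma IsPrespanner.exists_forall_edist_le (hH : IsPrespanner G H ℓ b e) (hb : 0 ≤ b)
    (P : Finset (V × V)) :
    ∃ H' ≤ G, numEdges H' ≤ numEdges H + #P * b ∧
      ∀ p ∈ P, G.edist p.1 p.2 ≤ ℓ → H'.edist p.1 p.2 ≤ G.edist p.1 p.2 + e := by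
  have hrepair (p : V × V) : ∃ F ≤ G, numEdges F ≤ b ∧
      (G.edist p.1 p.2 ≤ ℓ → (H ⊔ F).edist p.1 p.2 ≤ G.edist p.1 p.2 + e) := by
    by_cases h : G.edist p.1 p.2 ≤ ℓ
    · obtain ⟨F, hFG, hFb, hF⟩ := hH.repairable h
      exact ⟨F, hFG, hFb, fun _ ↦ hF⟩
    · exact ⟨⊥, bot_le, numEdges_bot.trans_le hb, fun h' ↦ absurd h' h⟩
  choose F hFG hFb hF using hrepair
  refine ⟨H ⊔ P.sup F, sup_le hH.le (Finset.sup_le fun p _ ↦ hFG p),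
    (numEdges_sup_le _ _).trans ?_, fun p hp hpℓ ↦ ?_⟩
  · gcongr
    exact (numEdges_finset_sup_le _ _).trans
      ((sum_le_card_nsmul _ _ _ fun p _ ↦ hFb p).trans_eq (nsmul_eq_mul _ _))
  · exact (edist_anti (sup_le_sup_left (le_sup hp) H)).trans (hF p hpℓ)

lemma exists_forall_edist_le_of_le_pow [Finite V] [Nonempty V] (G : SimpleGraph V) {R : ℕ}
    (hR : 0 < R) (hβ : 1 ≤ β) (hJ : 1 ≤ J) (hcard : (Nat.card V : ℝ) ≤ β ^ J)
    (hQ : 2 * (2 * 4 ^ J + 1) ^ 2 * (Real.log (2 * Nat.card V ^ 2 : ℕ) + 1) ≤ Q) (k : ℕ)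
    {P : Finset (V × V)} (hP : P.Nonempty) :
    ∃ H ≤ G, numEdges H ≤
        ((1 + 2 * k) * Q * β ^ (k + 1) + 1) * (#P : ℝ) ^ ((1 : ℝ) / 2 ^ (k + 1)) * Nat.card V ∧
      ∀ p ∈ P, G.edist p.1 p.2 ≤ (R ^ k : ℕ) →
        H.edist p.1 p.2 ≤ G.edist p.1 p.2 + additiveError (4 ^ J) R k := by
  set d : ℝ := (#P : ℝ) ^ ((1 : ℝ) / 2 ^ (k + 1)) with hd_def
  have hd : 1 ≤ d := Real.one_le_rpow (by exact_mod_cast hP.card_pos) (by positivity)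
  have hd_pow : (#P : ℝ) = d ^ (2 ^ (k + 1) - 1) * d := by
    rw [pow_sub_one_mul (by positivity), hd_def, one_div]
    exact_mod_cast (Real.rpow_inv_natCast_pow (Nat.cast_nonneg #P) (by positivity)).symm
  clear_value d
  obtain ⟨H, hH, hHedges⟩ := exists_isPrespanner_pow G hR hβ hJ hcard hd hQ k
  obtain ⟨H', hH'G, hH'edges, hH'⟩ := hH.exists_forall_edist_le (by positivity) P
  refine ⟨H', hH'G, hH'edges.trans ?_, hH'⟩
  calc numEdges H + #P * (Nat.card V / d ^ (2 ^ (k + 1) - 1))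
      ≤ (1 + 2 * k) * Q * β ^ (k + 1) * d * Nat.card V +
          d ^ (2 ^ (k + 1) - 1) * d * (Nat.card V / d ^ (2 ^ (k + 1) - 1)) := by
        rw [hd_pow]
        gcongr
    _ = ((1 + 2 * k) * Q * β ^ (k + 1) + 1) * d * Nat.card V := by field_simp

lemma le_rpow_pow_ceil {x : ℝ} (hx : 1 ≤ x) (hε : 0 < ε) : x ≤ (x ^ ε) ^ ⌈1 / ε⌉₊ := by
  rw [← Real.rpow_mul_natCast (by positivity)]
  exact Real.self_le_rpow_of_one_le hx ((div_le_iff₀' hε).1 (Nat.le_ceil (1 / ε)))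

lemma log_two_mul_sq_add_one_le {x : ℝ} (hx : 1 ≤ x) (hε : 0 < ε) :
    Real.log (2 * x ^ 2) + 1 ≤ (2 + 2 / ε) * x ^ ε := by
  have hlog : Real.log x ≤ x ^ ε / ε := Real.log_le_rpow_div (by positivity) hε
  have hone : 1 ≤ x ^ ε := Real.one_le_rpow hx hε.le
  calc Real.log (2 * x ^ 2) + 1 = Real.log 2 + 2 * Real.log x + 1 := by
        rw [Real.log_mul (by norm_num) (by positivity), Real.log_pow, Nat.cast_two]
    _ ≤ x ^ ε + 2 * (x ^ ε / ε) + x ^ ε := by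
        gcongr
        linarith [Real.log_two_lt_d9]
    _ = (2 + 2 / ε) * x ^ ε := by ring

lemma natLog_two_add_two_le {n : ℕ} (hn : n ≠ 0) (hε : 0 < ε) :
    (Nat.log 2 n + 2 : ℝ) ≤ (2 + 2 / ε) * (n : ℝ) ^ ε := by
  have hlog : Real.log n ≤ (n : ℝ) ^ ε / ε := Real.log_le_rpow_div (by positivity) hε
  have hone : 1 ≤ (n : ℝ) ^ ε := Real.one_le_rpow (Nat.one_le_cast.2 hn.bot_lt) hε.le
  have hnatLog : Nat.log 2 n * Real.log 2 ≤ Real.log n := by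
    rw [← Real.log_pow]
    exact Real.log_le_log (by positivity) (by exact_mod_cast Nat.pow_log_le_self 2 hn)
  have htwo : (Nat.log 2 n : ℝ) ≤ 2 * (Nat.log 2 n * Real.log 2) := by
    have := Real.log_two_gt_d9
    nlinarith [Nat.cast_nonneg (α := ℝ) (Nat.log 2 n)]
  calc (Nat.log 2 n + 2 : ℝ) ≤ 2 * ((n : ℝ) ^ ε / ε) + 2 * (n : ℝ) ^ ε := by linarith
    _ = (2 + 2 / ε) * (n : ℝ) ^ ε := by ring

lemma exists_forall_scale_edist_le (k : ℕ) (hε : 0 < ε) :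
    ∃ C : ℝ, 0 < C ∧ ∀ (V : Type u) [Finite V] (G : SimpleGraph V) (P : Finset (V × V)),
      ∃ H ≤ G, numEdges H ≤ C * (Nat.card V : ℝ) ^ (1 + (k + 3) * ε) *
          (#P : ℝ) ^ ((1 : ℝ) / 2 ^ (k + 1)) ∧
        ∀ p ∈ P, ∀ j < Nat.log 2 (Nat.card V) + 2, G.edist p.1 p.2 ≤ ((2 ^ j) ^ k : ℕ) →
          H.edist p.1 p.2 ≤ G.edist p.1 p.2 + additiveError (4 ^ ⌈1 / ε⌉₊) (2 ^ j) k := by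
  set J := ⌈1 / ε⌉₊
  set q : ℝ := 2 + 2 / ε
  set K : ℝ := 2 * (2 * 4 ^ J + 1) ^ 2 * q
  have hK : 0 < K := by positivity
  refine ⟨q * ((1 + 2 * k) * K + 1), by positivity, fun V _ G P ↦ ?_⟩
  obtain rfl | hP := P.eq_empty_or_nonempty
  · refine ⟨⊥, bot_le, ?_, by simp⟩
    rw [numEdges_bot]
    positivity
  have : Nonempty V := ⟨hP.choose.1⟩
  have hn : 1 ≤ (Nat.card V : ℝ) := Nat.one_le_cast.2 Nat.card_pos
  set n := (Nat.card V : ℝ)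
  set β : ℝ := n ^ ε
  set d : ℝ := (#P : ℝ) ^ ((1 : ℝ) / 2 ^ (k + 1))
  have hβ : 1 ≤ β := Real.one_le_rpow hn hε.le
  have hQ : 2 * (2 * 4 ^ J + 1) ^ 2 * (Real.log (2 * Nat.card V ^ 2 : ℕ) + 1) ≤ K * β := by
    push_cast
    rw [mul_assoc _ q]
    exact mul_le_mul_of_nonneg_left (log_two_mul_sq_add_one_le hn hε) (by positivity)
  choose H hHG hHedges hH using fun j ↦ exists_forall_edist_le_of_le_pow G (pow_pos two_pos j) hβ
    (Nat.ceil_pos.2 (by positivity)) (le_rpow_pow_ceil hn hε) hQ k hP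
  refine ⟨(range (Nat.log 2 (Nat.card V) + 2)).sup H, Finset.sup_le fun j _ ↦ hHG j, ?_,
    fun p hp j hj hδ ↦ (edist_anti (le_sup (mem_range.2 hj))).trans (hH j p hp hδ)⟩
  calc numEdges ((range (Nat.log 2 (Nat.card V) + 2)).sup H)
      ≤ (Nat.log 2 (Nat.card V) + 2 : ℕ) *
          (((1 + 2 * k) * (K * β) * β ^ (k + 1) + 1) * d * n) := by
        refine (numEdges_finset_sup_le _ _).trans
          ((sum_le_card_nsmul _ _ _ fun j _ ↦ hHedges j).trans_eq ?_)
        rw [card_range, nsmul_eq_mul]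
    _ ≤ q * β * (((1 + 2 * k) * (K * β) * β ^ (k + 1) + β ^ (k + 2)) * d * n) := by
        gcongr
        · exact_mod_cast natLog_two_add_two_le Nat.card_pos.ne' hε
        · exact one_le_pow₀ hβ
    _ = q * ((1 + 2 * k) * K + 1) * (n * β ^ (k + 3)) * d := by ring
    _ = q * ((1 + 2 * k) * K + 1) * n ^ (1 + (k + 3) * ε) * d := by
        congr 2
        rw [Real.rpow_add (by positivity), Real.rpow_one, ← Real.rpow_mul_natCast (by positivity)]
        push_cast
        ring_nf

lemma additiveError_succ_add (c R k : ℕ) :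
    additiveError c R (k + 1) + 8 * (c * R ^ k) = 8 * 3 ^ (k + 1) * (c * R ^ k) := by
  induction k with
  | zero => simp only [additiveError]; ring
  | succ k ih =>
    calc additiveError c R (k + 2) + 8 * (c * R ^ (k + 1))
        = 3 * R * (additiveError c R (k + 1) + 8 * (c * R ^ k)) := by
          rw [additiveError]
          ring
      _ = 8 * 3 ^ (k + 2) * (c * R ^ (k + 1)) := by
          rw [ih]
          ring

lemma exists_scale {δ n : ℕ} (hδ : δ ≠ 0) (hn : δ ≤ n) (k : ℕ) :
    ∃ j < Nat.log 2 n + 2, δ ≤ (2 ^ j) ^ (k + 1) ∧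
      ((2 : ℝ) ^ j) ^ k ≤ 2 ^ k * (δ : ℝ) ^ (1 - 1 / (k + 1 : ℕ) : ℝ) := by
  have hδ₁ : (1 : ℝ) ≤ δ := Nat.one_le_cast.2 hδ.bot_lt
  set x : ℝ := (δ : ℝ) ^ ((k + 1 : ℕ) : ℝ)⁻¹
  have hx : x ^ (k + 1) = δ := Real.rpow_inv_natCast_pow δ.cast_nonneg k.succ_ne_zero
  have hx₁ : 1 ≤ x := Real.one_le_rpow hδ₁ (by positivity)
  obtain ⟨i, hix, hxi⟩ := exists_nat_pow_near hx₁ one_lt_two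
  refine ⟨i + 1, ?_, ?_, ?_⟩
  · have hiδ : (2 : ℝ) ^ i ≤ δ := hix.trans ((le_self_pow₀ hx₁ k.succ_ne_zero).trans_eq hx)
    have hin : 2 ^ i ≤ n := le_trans (by exact_mod_cast hiδ) hn
    have := Nat.le_log_of_pow_le one_lt_two hin
    omega
  · have hδ_le : (δ : ℝ) ≤ (2 ^ (i + 1)) ^ (k + 1) := hx ▸ by gcongr
    exact_mod_cast hδ_le
  · have hx_pow : x ^ k = (δ : ℝ) ^ (1 - 1 / (k + 1 : ℕ) : ℝ) := by
      rw [← Real.rpow_mul_natCast δ.cast_nonneg]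
      congr 1
      push_cast
      field_simp
      ring
    rw [← hx_pow, pow_succ', mul_pow]
    gcongr

lemma exists_scale_additiveError_le {δ n : ℕ} (hδ : δ ≠ 0) (hn : δ ≤ n) (c : ℕ) {k : ℕ}
    (hk : 1 ≤ k) :
    ∃ j < Nat.log 2 n + 2, δ ≤ (2 ^ j) ^ k ∧
      (additiveError c (2 ^ j) k : ℝ) ≤ 4 * 6 ^ k * c * (δ : ℝ) ^ (1 - 1 / k : ℝ) := by
  obtain ⟨k, rfl⟩ := Nat.exists_eq_add_of_le' hk
  obtain ⟨j, hj, hδj, hscale⟩ := exists_scale hδ hn k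
  refine ⟨j, hj, hδj, ?_⟩
  calc (additiveError c (2 ^ j) (k + 1) : ℝ) ≤ 8 * 3 ^ (k + 1) * (c * (2 ^ j) ^ k) := by
        exact_mod_cast le_self_add.trans_eq (additiveError_succ_add c (2 ^ j) k)
    _ ≤ 8 * 3 ^ (k + 1) * (c * (2 ^ k * (δ : ℝ) ^ (1 - 1 / (k + 1 : ℕ) : ℝ))) := by gcongr
    _ = 4 * 6 ^ (k + 1) * c * (δ : ℝ) ^ (1 - 1 / (k + 1 : ℕ) : ℝ) := by
        rw [show (6 : ℝ) = 3 * 2 by norm_num, mul_pow]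
        ring

lemma reachable_and_dist_le_of_edist_le {s t : V} (hG : G.Reachable s t)
    (h : H.edist s t ≤ G.edist s t + e) : H.Reachable s t ∧ H.dist s t ≤ G.dist s t + e := by
  rw [← hG.coe_dist_eq_edist] at h
  have hH : H.Reachable s t := edist_ne_top_iff_reachable.1
    (ne_top_of_le_ne_top (by exact_mod_cast ENat.natCast_ne_top (G.dist s t + e)) h)
  rw [← hH.coe_dist_eq_edist] at h
  exact ⟨hH, by exact_mod_cast h⟩

lemma dist_lt_card [Finite V] {s t : V} (h : G.Reachable s t) : G.dist s t < Nat.card V := by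
  have := Fintype.ofFinite V
  obtain ⟨p, hp, hlen⟩ := h.exists_path_of_dist
  rw [Nat.card_eq_fintype_card, ← hlen]
  exact hp.length_lt

lemma rpow_one_add_mul_le (n : ℕ) {k : ℕ} (hk : 1 ≤ k) (hε : 0 < ε) :
    (n : ℝ) ^ (1 + (k + 3) * ε) ≤ (2 : ℝ) ^ (2 * k / ε) * (n : ℝ) ^ (1 + 10 * k * ε) := by
  have hk' : (1 : ℝ) ≤ k := Nat.one_le_cast.2 hk
  have htwo : 1 ≤ (2 : ℝ) ^ (2 * k / ε) := Real.one_le_rpow one_le_two (by positivity)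
  refine le_trans ?_ (le_mul_of_one_le_left (by positivity) htwo)
  obtain rfl | hn := n.eq_zero_or_pos
  · rw [Nat.cast_zero, Real.zero_rpow (by positivity)]
    positivity
  · refine Real.rpow_le_rpow_of_exponent_le (Nat.one_le_cast.2 hn) ?_
    gcongr
    linarith

lemma four_mul_six_pow_mul_four_pow_le {k : ℕ} (hk : 1 ≤ k) (hε : 0 < ε) (hε₁ : ε < 1) :
    (4 * 6 ^ k * 4 ^ ⌈1 / ε⌉₊ : ℝ) ≤ (2 : ℝ) ^ (30 * k / ε) := by
  have hceil : (⌈1 / ε⌉₊ : ℝ) ≤ 1 / ε + 1 := (Nat.ceil_lt_add_one (by positivity)).le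
  have hk' : (1 : ℝ) ≤ k := Nat.one_le_cast.2 hk
  have hε' : 1 ≤ 1 / ε := ((one_lt_div hε).2 hε₁).le
  calc (4 * 6 ^ k * 4 ^ ⌈1 / ε⌉₊ : ℝ) ≤ 4 * 8 ^ k * 4 ^ ⌈1 / ε⌉₊ := by gcongr; norm_num
    _ = (2 : ℝ) ^ (2 + 3 * k + 2 * ⌈1 / ε⌉₊ : ℝ) := by
        rw [show (8 : ℝ) = 2 ^ 3 by norm_num, show (4 : ℝ) = 2 ^ 2 by norm_num, ← pow_mul,
          ← pow_mul, ← pow_add, ← pow_add]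
        exact_mod_cast rfl
    _ ≤ (2 : ℝ) ^ (30 * k / ε) := by
        refine Real.rpow_le_rpow_of_exponent_le one_le_two ?_
        rw [mul_div_assoc, div_eq_mul_one_div (k : ℝ)]
        nlinarith

end Assembly

end PairwiseSpanner

open Finset PairwiseSpanner in
theorem pairwise_sublinear_additive_spanner_general.{u}
    (k : ℕ) (hk : 1 ≤ k) (ε : ℝ) (hε : 0 < ε) :
    ∃ C : ℝ, 0 < C ∧
      ∀ (V : Type u) [Finite V] (G : SimpleGraph V) (P : Finset (V × V)),
        ∃ H : SimpleGraph V, H ≤ G ∧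
          (H.edgeSet.ncard : ℝ) ≤ C * (Nat.card V : ℝ) ^ (1 + (k + 3) * ε) *
            (#P : ℝ) ^ ((1 : ℝ) / 2 ^ (k + 1)) ∧
          ∀ p ∈ P, G.Reachable p.1 p.2 →
            H.Reachable p.1 p.2 ∧
            (H.dist p.1 p.2 : ℝ) ≤ G.dist p.1 p.2 +
              4 * 6 ^ k * 4 ^ ⌈1 / ε⌉₊ * (G.dist p.1 p.2 : ℝ) ^ (1 - 1 / k : ℝ) := by
  obtain ⟨C, hC, hspanner⟩ := exists_forall_scale_edist_le k hε
  refine ⟨C, hC, fun V _ G P ↦ ?_⟩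
  obtain ⟨H, hHG, hHedges, hH⟩ := hspanner V G P
  refine ⟨H, hHG, hHedges, fun ⟨s, t⟩ hp hst ↦ ?_⟩
  obtain rfl | hne := eq_or_ne s t
  · exact ⟨.rfl, by simp only [SimpleGraph.dist_self, Nat.cast_zero]; positivity⟩
  obtain ⟨j, hj, hscale, herror⟩ := exists_scale_additiveError_le
    (hst.dist_eq_zero_iff.not.2 hne) (dist_lt_card hst).le (4 ^ ⌈1 / ε⌉₊) hk
  obtain ⟨hreach, hdist⟩ := reachable_and_dist_le_of_edist_le hst <|
    hH _ hp j hj (hst.coe_dist_eq_edist ▸ Nat.cast_le.2 hscale)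
  refine ⟨hreach, (Nat.cast_le.2 hdist).trans ?_⟩
  push_cast at herror ⊢
  gcongr

/-- **Pairwise sublinear additive spanners.**
For every integer `k ≥ 1` and `0 < ε < 1`, there is a constant `C` (depending
only on `k` and `ε`) such that: for every finite simple graph `G` on `n`
vertices and every finite set `P` of (ordered) pairs of vertices, there is a
subgraph `H ⊆ G` with at most
`C · 2^(2k/ε) · n^(1 + 10kε) · |P|^(1/2^(k+1))` edges such that for every
`(s,t) ∈ P` with `s, t` connected in `G`,
`dist_H(s,t) ≤ dist_G(s,t) + 2^(30k/ε) · dist_G(s,t)^(1 − 1/k)`. -/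
theorem pairwise_sublinear_additive_spanner
    (k : ℕ) (hk : 1 ≤ k) (ε : ℝ) (hε : 0 < ε) (hε1 : ε < 1) :
    ∃ C : ℝ, 0 < C ∧
      ∀ (V : Type) [Fintype V] (G : SimpleGraph V) (P : Finset (V × V)),
        ∃ H : SimpleGraph V, H ≤ G ∧
          (H.edgeSet.ncard : ℝ) ≤
            C * (2 : ℝ) ^ ((2 * (k : ℝ)) / ε) *
              (Fintype.card V : ℝ) ^ ((1 : ℝ) + 10 * (k : ℝ) * ε) *
              (P.card : ℝ) ^ ((1 : ℝ) / 2 ^ (k + 1)) ∧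
          ∀ p ∈ P, G.Reachable p.1 p.2 →
            H.Reachable p.1 p.2 ∧
            (H.dist p.1 p.2 : ℝ) ≤ (G.dist p.1 p.2 : ℝ) +
              (2 : ℝ) ^ ((30 * (k : ℝ)) / ε) *
                (G.dist p.1 p.2 : ℝ) ^ ((1 : ℝ) - 1 / (k : ℝ)) := by
  obtain ⟨C, hC, hspanner⟩ := pairwise_sublinear_additive_spanner_general k hk ε hε
  refine ⟨C, hC, fun V _ G P ↦ ?_⟩
  obtain ⟨H, hHG, hHedges, hH⟩ := hspanner V G P
  refine ⟨H, hHG, hHedges.trans ?_, fun p hp hst ↦ ⟨(hH p hp hst).1, (hH p hp hst).2.trans ?_⟩⟩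
  · rw [Nat.card_eq_fintype_card, mul_assoc C (2 ^ _)]
    gcongr
    exact PairwiseSpanner.rpow_one_add_mul_le _ hk hε
  · gcongr
    exact PairwiseSpanner.four_mul_six_pow_mul_four_pow_le hk hε hε1
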